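/- arXiv:2407.13636 — 5 statements merged into one kernel-verified Lean document; each statement's English description precedes it below -/
import Mathlib

section
/- For every l ∈ [0, s] the sieve formula holds: the alternating sum over all non-empty subsets I ⊆ [0, l] of (-1)^{|I|+1} · N(s−I) is congruent to 1 modulo p^{l+1}. -/
/-- `chainCount G p s I` is the number `N(s - I)` of chains of `p`-subgroups of `G`:
for `I = {c₁ > c₂ > … > c_k} ⊆ [0, s]`, this counts tuples `U₁ ≤ U₂ ≤ … ≤ U_k ≤ G`
with `|U_i| = p^(s - c_i)`.  Formally, a chain is a function `f` on `I` which is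
antitone (larger `c` gives the smaller subgroup) with `|f c| = p^(s - c)`. -/
noncomputable def chainCount (G : Type*) [Group G] (p s : ℕ) (I : Finset ℕ) : ℕ :=
  Nat.card {f : I → Subgroup G //
    (∀ i j : I, (i : ℕ) ≤ (j : ℕ) → f j ≤ f i) ∧
    ∀ i : I, Nat.card (f i) = p ^ (s - (i : ℕ))}

open scoped Pointwise
open Classical in
theorem sv_fiber {K : Type*} [Group K] [Fintype K] [DecidableEq K] (U : Subgroup K) (q : K ⧸ U) :
    (Finset.univ.filter (fun x : K => (QuotientGroup.mk x⁻¹ : K ⧸ U) = q)).card = Nat.card U := by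
  obtain ⟨g, rfl⟩ := QuotientGroup.mk_surjective q
  rw [show Nat.card U = (U : Set K).toFinset.card from Nat.card_eq_card_toFinset (U : Set K)]
  symm
  apply Finset.card_bij (fun u _ => u * g⁻¹)
  · intro u hu
    have hu' : u ∈ U := by simpa using hu
    simp [QuotientGroup.eq, hu']
  · intro a _ b _ h
    simpa using h
  · intro x hx
    refine ⟨x * g, ?_, by simp⟩
    simpa [QuotientGroup.eq] using hx

open Classical in
theorem sv_mem_iff {K : Type*} [Group K] [Fintype K] [DecidableEq K] (U : Subgroup K) (X : Finset K)
    (hX : U ≤ MulAction.stabilizer K X) (x : K) :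
    x ∈ X ↔ (QuotientGroup.mk x⁻¹ : K ⧸ U) ∈ X.image (fun x : K => (QuotientGroup.mk x⁻¹ : K ⧸ U)) := by
  constructor
  · intro h; exact Finset.mem_image_of_mem _ h
  · intro h
    obtain ⟨y, hy, h⟩ := Finset.mem_image.1 h
    rw [QuotientGroup.eq] at h
    have h2 : x * y⁻¹ ∈ U := by simpa using U.inv_mem h
    have h3 := hX h2
    rw [MulAction.mem_stabilizer_iff] at h3
    rw [← h3]
    have := Finset.smul_mem_smul_finset (a := x * y⁻¹) hy
    simpa using this

open Classical in
theorem sv_card_pre {K : Type*} [Group K] [Fintype K] [DecidableEq K] (U : Subgroup K) (S : Finset (K ⧸ U)) :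
    (Finset.univ.filter (fun x : K => (QuotientGroup.mk x⁻¹ : K ⧸ U) ∈ S)).card
      = S.card * Nat.card U := by
  rw [Finset.card_eq_sum_card_fiberwise (f := fun x : K => (QuotientGroup.mk x⁻¹ : K ⧸ U)) (t := S)]
  · rw [Finset.sum_const_nat]
    intro q hq
    rw [← sv_fiber U q]
    congr 1
    ext x
    simp only [Finset.mem_filter, Finset.mem_univ, true_and]
    constructor
    · exact fun h => h.2
    · intro h; exact ⟨h ▸ hq, h⟩
  · intro x hx
    simpa using hx

open Classical in
theorem sv_stab_dvd {K : Type*} [Group K] [Fintype K] [DecidableEq K] (X : Finset K) :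
    Nat.card (MulAction.stabilizer K X) ∣ X.card := by
  obtain ⟨S, hS⟩ : ∃ S : Finset (K ⧸ MulAction.stabilizer K X),
      ∀ x, x ∈ X ↔ (QuotientGroup.mk x⁻¹ : K ⧸ MulAction.stabilizer K X) ∈ S :=
    ⟨_, sv_mem_iff _ X le_rfl⟩
  have h := sv_card_pre (MulAction.stabilizer K X) S
  have h2 : Finset.univ.filter
      (fun x : K => (QuotientGroup.mk x⁻¹ : K ⧸ MulAction.stabilizer K X) ∈ S) = X := by
    ext x
    simp [hS x]
  refine ⟨S.card, ?_⟩
  rw [mul_comm, ← h]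
  conv_lhs => rw [← h2]
  convert rfl

open Classical in
theorem sv_count {K : Type*} [Group K] [Fintype K] [DecidableEq K] (U : Subgroup K) (m : ℕ) :
    (Finset.univ.filter (fun X : Finset K => X.card = m * Nat.card U ∧
      U ≤ MulAction.stabilizer K X)).card = (Nat.card (K ⧸ U)).choose m := by
  rw [Nat.card_eq_fintype_card (α := K ⧸ U), ← Finset.card_univ, ← Finset.card_powersetCard]
  symm
  apply Finset.card_bij
    (fun S _ => Finset.univ.filter (fun x : K => (QuotientGroup.mk x⁻¹ : K ⧸ U) ∈ S))
  · intro S hS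
    rw [Finset.mem_powersetCard] at hS
    simp only [Finset.mem_filter, Finset.mem_univ, true_and]
    refine ⟨by rw [sv_card_pre, hS.2], ?_⟩
    intro u hu
    rw [MulAction.mem_stabilizer_iff]
    ext x
    rw [← Finset.inv_smul_mem_iff]
    have : (QuotientGroup.mk (x⁻¹ * u) : K ⧸ U) = QuotientGroup.mk x⁻¹ := by
      rw [QuotientGroup.eq]; simp [hu]
    simp [this]
  · intro S _ S' _ h
    ext q
    obtain ⟨g, rfl⟩ := QuotientGroup.mk_surjective q
    have := Finset.ext_iff.1 h g⁻¹
    simpa using this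
  · intro X hX
    simp only [Finset.mem_filter, Finset.mem_univ, true_and] at hX
    have h2 : Finset.univ.filter (fun x : K => (QuotientGroup.mk x⁻¹ : K ⧸ U) ∈
      (X.image (fun x : K => (QuotientGroup.mk x⁻¹ : K ⧸ U)))) = X := by
      ext x
      rw [sv_mem_iff _ X hX.2 x]
      simp
    refine ⟨X.image (fun x : K => (QuotientGroup.mk x⁻¹ : K ⧸ U)), ?_, h2⟩
    rw [Finset.mem_powersetCard]
    refine ⟨Finset.subset_univ _, ?_⟩
    have h := sv_card_pre U (X.image (fun x : K => (QuotientGroup.mk x⁻¹ : K ⧸ U)))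
    rw [h2, hX.1] at h
    exact (Nat.eq_of_mul_eq_mul_right Nat.card_pos h).symm

open Classical in
theorem sv_orbits {K A : Type*} [Group K] [Finite K] [Fintype A] [MulAction K A] (s : Finset A)
    (m : ℕ) (hs : ∀ g : K, ∀ a ∈ s, g • a ∈ s)
    (hm : ∀ a ∈ s, m * Nat.card (MulAction.stabilizer K a) ∣ Nat.card K) : m ∣ s.card := by
  rw [Finset.card_eq_sum_card_image (fun a => (Quotient.mk (MulAction.orbitRel K A) a))]
  apply Finset.dvd_sum
  intro q hq
  obtain ⟨a, ha, rfl⟩ := Finset.mem_image.1 hq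
  have h1 : (s.filter (fun b => Quotient.mk (MulAction.orbitRel K A) b
      = Quotient.mk (MulAction.orbitRel K A) a)) = (MulAction.orbit K a).toFinset := by
    ext b
    simp only [Finset.mem_filter, Set.mem_toFinset]
    rw [Quotient.eq, MulAction.orbitRel_apply]
    constructor
    · exact fun h => h.2
    · rintro ⟨g, rfl⟩
      exact ⟨hs g a ha, ⟨g, rfl⟩⟩
  rw [h1, ← Nat.card_eq_card_toFinset]
  have h2 := hm a ha
  have h3 : Nat.card (MulAction.orbit K a) * Nat.card (MulAction.stabilizer K a) = Nat.card K := by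
    rw [← Nat.card_prod]
    exact Nat.card_congr (MulAction.orbitProdStabilizerEquivGroup K a)
  rw [← h3] at h2
  exact Nat.dvd_of_mul_dvd_mul_right Nat.card_pos h2

open Classical in
theorem sv_choose_aux {K : Type} [CommGroup K] [IsCyclic K] [Fintype K] [DecidableEq K]
    (p τ b n : ℕ) (hp : p.Prime) (hn : 0 < n)
    (hK : Nat.card K = p ^ (τ + b + 1) * n) :
    ((p ^ (τ + b + 1) * n).choose (p ^ (b + 1)) : ℤ) ≡ ((p ^ (τ + b) * n).choose (p ^ b) : ℤ)
      [ZMOD ((p ^ (τ + b + 1) * n : ℕ) : ℤ)] := by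
  have hp0 := hp.pos
  have := Fact.mk hp
  obtain ⟨N, hN⟩ : ∃ N, N = p ^ (τ + b + 1) * n := ⟨_, rfl⟩
  rw [← hN] at hK ⊢
  have hN0 : 0 < N := by rw [hN]; positivity
  have hpN : p ∣ N := ⟨p ^ (τ + b) * n, by rw [hN]; ring⟩
  let U : Subgroup K := (powMonoidHom p : K →* K).ker
  have hU : Nat.card U = p := by
    rw [IsCyclic.card_powMonoidHom_ker, hK]
    exact Nat.gcd_eq_right hpN
  have hUS : ∀ S : Subgroup K, p ∣ Nat.card S → U ≤ S := by
    intro S hS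
    obtain ⟨x, hx⟩ := exists_prime_orderOf_dvd_card' p hS
    have h1 : Subgroup.zpowers (x : K) ≤ U := by
      rw [Subgroup.zpowers_le]
      change (x : K) ^ p = 1
      rw [← hx]
      exact_mod_cast pow_orderOf_eq_one x
    have h2 : Subgroup.zpowers (x : K) = U := by
      apply Subgroup.eq_of_le_of_card_ge h1
      rw [hU, Nat.card_zpowers, Subgroup.orderOf_coe, hx]
    rw [← h2, Subgroup.zpowers_le]
    exact x.2
  have h1 := sv_count U (p ^ b)
  have h0 := sv_count (⊥ : Subgroup K) (p ^ (b + 1))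
  have hq1 : Nat.card (K ⧸ U) = p ^ (τ + b) * n := by
    have := Subgroup.card_eq_card_quotient_mul_card_subgroup U
    rw [hK, hU] at this
    apply Nat.eq_of_mul_eq_mul_right hp0
    rw [← this, hN]; ring
  have hq0 : Nat.card (K ⧸ (⊥ : Subgroup K)) = N := by
    have := Subgroup.card_eq_card_quotient_mul_card_subgroup (⊥ : Subgroup K)
    rw [hK] at this
    simpa using this.symm
  rw [hq1, hU, ← pow_succ] at h1
  rw [hq0] at h0
  simp only [Subgroup.card_bot, mul_one, bot_le, and_true] at h0
  rw [← h1, ← h0]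
  rw [← Finset.card_filter_add_card_filter_not (s := Finset.univ.filter (fun X : Finset K => X.card = p ^ (b + 1))) (fun X => U ≤ MulAction.stabilizer K X)]
  rw [Finset.filter_filter]
  have h3 : N ∣ (Finset.filter (fun X => ¬ U ≤ MulAction.stabilizer K X) (Finset.univ.filter (fun X : Finset K => X.card = p ^ (b + 1)))).card := by
    apply sv_orbits (K := K)
    · intro g X hX
      simp only [Finset.mem_filter, Finset.mem_univ, true_and, Finset.card_smul_finset] at hX ⊢
      refine ⟨hX.1, ?_⟩
      rw [MulAction.stabilizer_smul_eq_stabilizer_map_conj]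
      have : MulAut.conj g = 1 := by ext; simp
      rw [this]
      convert hX.2
      exact Subgroup.map_id _
    · intro X hX
      simp only [Finset.mem_filter, Finset.mem_univ, true_and] at hX
      have h4 := sv_stab_dvd X
      rw [hX.1, Nat.dvd_prime_pow hp] at h4
      obtain ⟨d, _, hd⟩ := h4
      have : d = 0 := by
        by_contra h
        apply hX.2
        apply hUS
        rw [hd]; exact dvd_pow_self p h
      rw [hd, this, hK]; simp
  push_cast
  rw [Int.modEq_iff_dvd]
  rw [← dvd_neg]
  have : (N : ℤ) ∣ _ := Int.natCast_dvd_natCast.2 h3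
  obtain ⟨z, hz⟩ := this
  refine ⟨z, ?_⟩
  rw [← hz]
  abel

theorem sv_choose (p τ b n : ℕ) (hp : p.Prime) (hn : 0 < n) :
    ((p ^ (τ + b + 1) * n).choose (p ^ (b + 1)) : ℤ) ≡ ((p ^ (τ + b) * n).choose (p ^ b) : ℤ)
      [ZMOD ((p ^ (τ + b + 1) * n : ℕ) : ℤ)] := by
  have : NeZero (p ^ (τ + b + 1) * n) := ⟨by have := hp.pos; positivity⟩
  exact sv_choose_aux (K := Multiplicative (ZMod (p ^ (τ + b + 1) * n))) p τ b n hp hn (by simp)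

theorem sv_E (p τ b n : ℕ) (hp : p.Prime) (hn : 0 < n) :
    ((p ^ (τ + b) * n).choose (p ^ b)) = p ^ τ * n * (p ^ (τ + b) * n - 1).choose (p ^ b - 1) := by
  have hp0 := hp.pos
  have h := Nat.add_one_mul_choose_eq (p ^ (τ + b) * n - 1) (p ^ b - 1)
  have h1 : 0 < p ^ (τ + b) * n := by positivity
  have h2 : 0 < p ^ b := by positivity
  rw [Nat.sub_add_cancel h1, Nat.sub_add_cancel h2] at h
  apply Nat.eq_of_mul_eq_mul_right h2
  rw [← h]
  ring

theorem sv_E_step (p τ b n : ℕ) (hp : p.Prime) (hn : 0 < n) :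
    (((p ^ (τ + (b + 1)) * n - 1).choose (p ^ (b + 1) - 1) : ℕ) : ℤ) ≡
      (((p ^ (τ + b) * n - 1).choose (p ^ b - 1) : ℕ) : ℤ) [ZMOD (p : ℤ) ^ (b + 1)] := by
  have hp0 := hp.pos
  have h := sv_choose p τ b n hp hn
  rw [add_assoc, sv_E p τ (b + 1) n hp hn, sv_E p τ b n hp hn] at h
  have h0 : ((p ^ τ * n : ℕ) : ℤ) ≠ 0 := by
    have : 0 < p ^ τ * n := by positivity
    exact_mod_cast this.ne'
  rw [Int.modEq_iff_dvd] at h ⊢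
  apply (mul_dvd_mul_iff_left h0).1
  generalize (p ^ (τ + b) * n - 1).choose (p ^ b - 1) = x at h ⊢
  generalize (p ^ (τ + (b + 1)) * n - 1).choose (p ^ (b + 1) - 1) = y at h ⊢
  obtain ⟨z, hz⟩ := h
  refine ⟨z, ?_⟩
  push_cast at hz ⊢
  rw [mul_sub, hz]
  ring

theorem sv_E_le (p τ n : ℕ) (hp : p.Prime) (hn : 0 < n) (b c : ℕ) (h : b ≤ c) :
    (((p ^ (τ + c) * n - 1).choose (p ^ c - 1) : ℕ) : ℤ) ≡
      (((p ^ (τ + b) * n - 1).choose (p ^ b - 1) : ℕ) : ℤ) [ZMOD (p : ℤ) ^ (b + 1)] := by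
  induction c, h using Nat.le_induction with
  | base => rfl
  | succ c hc ih =>
    refine Int.ModEq.trans ?_ ih
    exact (sv_E_step p τ c n hp hn).of_dvd (pow_dvd_pow _ (by omega))

theorem sv_E_cop (p τ n b : ℕ) (hp : p.Prime) (hn : 0 < n) (j : ℕ) :
    IsCoprime ((p : ℤ) ^ j) (((p ^ (τ + b) * n - 1).choose (p ^ b - 1) : ℕ) : ℤ) := by
  apply IsCoprime.pow_left
  rw [Nat.isCoprime_iff_coprime, hp.coprime_iff_not_dvd]
  intro hd
  have h := sv_E_le p τ n hp hn 0 b (Nat.zero_le _)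
  have h2 : (p : ℤ) ∣ (((p ^ (τ + b) * n - 1).choose (p ^ b - 1) : ℕ) : ℤ) := by exact_mod_cast hd
  rw [zero_add, pow_one] at h
  have h3 := (Int.ModEq.dvd_iff h).1 h2
  simp at h3
  have := Int.natCast_dvd_natCast.1 (show (p : ℤ) ∣ ((1 : ℕ) : ℤ) by simpa using h3)
  exact hp.one_lt.ne' (Nat.dvd_one.1 this)

open Classical in
theorem sv_main {K : Type*} [Group K] [Fintype K] [DecidableEq K] [Fintype (Subgroup K)]
    (p t n r j : ℕ) (hp : p.Prime) (hK : Nat.card K = p ^ t * n) (hn : ¬ p ∣ n) (hr : r ≤ t)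
    (hj : j ≤ r + 1) (w : ℕ → Subgroup K → ℤ)
    (hw1 : ∀ a < j, ∀ V : Subgroup K, Nat.card V = p ^ (r - a) →
      ∑ b ∈ Finset.range j, ∑ U ∈ Finset.univ.filter
        (fun U : Subgroup K => Nat.card U = p ^ (r - b) ∧ U ≤ V), w b U = 1)
    (hw2 : ∀ b < j, ∀ U : Subgroup K, Nat.card U = p ^ (r - b) → (p : ℤ) ^ (j - 1 - b) ∣ w b U) :
    ∑ b ∈ Finset.range j, ∑ U ∈ Finset.univ.filter
        (fun U : Subgroup K => Nat.card U = p ^ (r - b)), w b U ≡ 1 [ZMOD (p : ℤ) ^ j] := by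
  have hp0 := hp.pos
  have hn0 : 0 < n := Nat.pos_of_ne_zero (fun h => hn (h ▸ dvd_zero p))
  rcases Nat.eq_zero_or_pos j with rfl | hj0
  · simp [Int.modEq_one]
  obtain ⟨τ, rfl⟩ := Nat.exists_eq_add_of_le hr
  have hc : ∀ b < j, ∀ U : Subgroup K, Nat.card U = p ^ (r - b) →
      ((Finset.univ.filter (fun X : Finset K => X.card = p ^ r)).filter
        (fun X => U ≤ MulAction.stabilizer K X)).card = (p ^ (τ + b) * n).choose (p ^ b) := by
    intro b hb U hU
    have hbr : b ≤ r := by omega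
    have h := sv_count U (p ^ b)
    have hq : Nat.card (K ⧸ U) = p ^ (τ + b) * n := by
      have := Subgroup.card_eq_card_quotient_mul_card_subgroup U
      rw [hK, hU] at this
      apply Nat.eq_of_mul_eq_mul_right (show 0 < p ^ (r - b) by positivity)
      rw [← this]
      obtain ⟨c, rfl⟩ := Nat.exists_eq_add_of_le hbr
      rw [Nat.add_sub_cancel_left]; ring
    rw [hq, hU, ← pow_add, Nat.add_sub_cancel' hbr] at h
    rw [Finset.filter_filter, h]
  have hc0 : (Finset.univ.filter (fun X : Finset K => X.card = p ^ r)).card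
      = (p ^ (τ + r) * n).choose (p ^ r) := by
    have h := sv_count (⊥ : Subgroup K) (p ^ r)
    have hq0 : Nat.card (K ⧸ (⊥ : Subgroup K)) = p ^ (r + τ) * n := by
      have := Subgroup.card_eq_card_quotient_mul_card_subgroup (⊥ : Subgroup K)
      rw [hK] at this
      simpa using this.symm
    rw [hq0, add_comm r τ] at h
    simp only [Subgroup.card_bot, mul_one, bot_le, and_true] at h
    exact h
  have hbad : p ^ (τ + j) ∣ ((Finset.univ.filter (fun X : Finset K => X.card = p ^ r)).filter
      (fun X => ¬ ∃ a < j, Nat.card (MulAction.stabilizer K X) = p ^ (r - a))).card := by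
    apply sv_orbits (K := K)
    · intro g X hX
      simp only [Finset.mem_filter, Finset.mem_univ, true_and, Finset.card_smul_finset] at hX ⊢
      refine ⟨hX.1, ?_⟩
      rw [MulAction.stabilizer_smul_eq_stabilizer_map_conj, 
        Subgroup.card_map_of_injective (MulAut.conj g).injective]
      exact hX.2
    · intro X hX
      simp only [Finset.mem_filter, Finset.mem_univ, true_and] at hX
      have h4 := sv_stab_dvd X
      rw [hX.1, Nat.dvd_prime_pow hp] at h4
      obtain ⟨d, hdr, hd⟩ := h4
      have : d + j ≤ r := by
        by_contra h
        exact hX.2 ⟨r - d, by omega, by rw [hd]; congr 1; omega⟩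
      rw [hd, hK, ← pow_add]
      exact Dvd.dvd.mul_right (pow_dvd_pow _ (by omega)) _
  have hX : ∀ X ∈ Finset.univ.filter (fun X : Finset K => X.card = p ^ r),
      ∑ b ∈ Finset.range j, ∑ U ∈ Finset.univ.filter (fun U : Subgroup K => Nat.card U = p ^ (r - b)),
        (if U ≤ MulAction.stabilizer K X then w b U else 0)
      = if ∃ a < j, Nat.card (MulAction.stabilizer K X) = p ^ (r - a) then 1 else 0 := by
    intro X hX
    simp only [Finset.mem_filter, Finset.mem_univ, true_and] at hX
    split_ifs with h
    · obtain ⟨a, ha, h⟩ := h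
      rw [← hw1 a ha _ h]
      refine Finset.sum_congr rfl fun b _ => ?_
      rw [← Finset.sum_filter, Finset.filter_filter]
    · refine Finset.sum_eq_zero fun b hb => Finset.sum_eq_zero fun U hU => ?_
      rw [if_neg]
      intro hle
      apply h
      simp only [Finset.mem_filter, Finset.mem_univ, true_and, Finset.mem_range] at hU hb
      have h4 := sv_stab_dvd X
      rw [hX, Nat.dvd_prime_pow hp] at h4
      obtain ⟨d, hdr, hd⟩ := h4
      have h5 := Subgroup.card_le_of_le hle
      rw [hU, hd] at h5
      have h6 := (Nat.pow_le_pow_iff_right hp.one_lt).1 h5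
      exact ⟨r - d, by omega, by rw [hd]; congr 1; omega⟩
  have key : ∑ b ∈ Finset.range j, ∑ U ∈ Finset.univ.filter
        (fun U : Subgroup K => Nat.card U = p ^ (r - b)),
          w b U * ((p ^ (τ + b) * n).choose (p ^ b) : ℕ) ≡ ((p ^ (τ + r) * n).choose (p ^ r) : ℕ)
          [ZMOD (p : ℤ) ^ (τ + j)] := by
    have e : ∑ b ∈ Finset.range j, ∑ U ∈ Finset.univ.filter
        (fun U : Subgroup K => Nat.card U = p ^ (r - b)),
          w b U * ((p ^ (τ + b) * n).choose (p ^ b) : ℕ) =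
        ∑ X ∈ Finset.univ.filter (fun X : Finset K => X.card = p ^ r),
        ∑ b ∈ Finset.range j, ∑ U ∈ Finset.univ.filter
          (fun U : Subgroup K => Nat.card U = p ^ (r - b)),
          (if U ≤ MulAction.stabilizer K X then w b U else 0) := by
      rw [Finset.sum_comm]
      refine Finset.sum_congr rfl fun b hb => ?_
      rw [Finset.sum_comm]
      refine Finset.sum_congr rfl fun U hU => ?_
      simp only [Finset.mem_filter, Finset.mem_univ, true_and, Finset.mem_range] at hU hb
      rw [← hc b hb U hU, ← Finset.sum_filter, Finset.sum_const, nsmul_eq_mul, mul_comm]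
    rw [e, Finset.sum_congr rfl hX, Finset.sum_boole, ← hc0,
      ← Finset.card_filter_add_card_filter_not (s := Finset.univ.filter
        (fun X : Finset K => X.card = p ^ r))
        (fun X => ∃ a < j, Nat.card (MulAction.stabilizer K X) = p ^ (r - a))]
    rw [Int.modEq_iff_dvd]
    have := Int.natCast_dvd_natCast.2 hbad
    push_cast at this ⊢
    rw [add_sub_cancel_left]
    exact this
  have key2 : ∑ b ∈ Finset.range j, ∑ U ∈ Finset.univ.filter
        (fun U : Subgroup K => Nat.card U = p ^ (r - b)),
          w b U * ((p ^ (τ + b) * n - 1).choose (p ^ b - 1) : ℕ) ≡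
          ((p ^ (τ + r) * n - 1).choose (p ^ r - 1) : ℕ) [ZMOD (p : ℤ) ^ j] := by
    have hcop : IsCoprime ((p : ℤ) ^ j) (n : ℤ) := by
      apply IsCoprime.pow_left
      rwa [Nat.isCoprime_iff_coprime, hp.coprime_iff_not_dvd]
    have h0 : (p : ℤ) ^ τ ≠ 0 := by positivity
    rw [Int.modEq_iff_dvd] at key ⊢
    apply hcop.dvd_of_dvd_mul_left
    apply (mul_dvd_mul_iff_left h0).1
    rw [← pow_add]
    refine key.trans (dvd_of_eq (Eq.symm ?_))
    rw [mul_sub, mul_sub, sv_E p τ r n hp hn0]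
    congr 1
    · push_cast; ring
    · rw [Finset.mul_sum, Finset.mul_sum]
      refine Finset.sum_congr rfl fun b hb => ?_
      rw [Finset.mul_sum, Finset.mul_sum]
      refine Finset.sum_congr rfl fun U hU => ?_
      rw [sv_E p τ b n hp hn0]
      generalize (p ^ (τ + b) * n - 1).choose (p ^ b - 1) = x
      push_cast; ring
  obtain ⟨i, rfl⟩ : ∃ i, j = i + 1 := ⟨j - 1, by omega⟩
  have key3 : (∑ b ∈ Finset.range (i + 1), ∑ U ∈ Finset.univ.filter
        (fun U : Subgroup K => Nat.card U = p ^ (r - b)), w b U) *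
          ((p ^ (τ + i) * n - 1).choose (p ^ i - 1) : ℕ) ≡
      ∑ b ∈ Finset.range (i + 1), ∑ U ∈ Finset.univ.filter
        (fun U : Subgroup K => Nat.card U = p ^ (r - b)),
          w b U * ((p ^ (τ + b) * n - 1).choose (p ^ b - 1) : ℕ) [ZMOD (p : ℤ) ^ (i + 1)] := by
    rw [Int.modEq_iff_dvd, Finset.sum_mul, ← Finset.sum_sub_distrib]
    refine Finset.dvd_sum fun b hb => ?_
    rw [Finset.sum_mul, ← Finset.sum_sub_distrib]
    refine Finset.dvd_sum fun U hU => ?_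
    simp only [Finset.mem_filter, Finset.mem_univ, true_and, Finset.mem_range] at hU hb
    rw [← mul_sub]
    have h1 := hw2 b hb U hU
    have h2 := (sv_E_le p τ n hp hn0 b i (by omega)).dvd
    have h3 := mul_dvd_mul h1 h2
    rw [← pow_add] at h3
    rwa [show i + 1 - 1 - b + (b + 1) = i + 1 by omega] at h3
  have h4 := (key3.trans key2).trans (sv_E_le p τ n hp hn0 i r (by omega))
  rw [Int.modEq_iff_dvd] at h4 ⊢
  apply (sv_E_cop p τ n i hp hn0 (i + 1)).dvd_of_dvd_mul_right
  rw [sub_mul, one_mul]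
  exact h4

/-- Chains on the index set `I` inside `H`. -/
def SvChain {G : Type*} [Group G] (p s : ℕ) (H : Subgroup G) (I : Finset ℕ) : Type _ :=
  {f : I → Subgroup G //
    ((∀ i j : I, (i : ℕ) ≤ (j : ℕ) → f j ≤ f i) ∧
    ∀ i : I, Nat.card (f i) = p ^ (s - (i : ℕ))) ∧ ∀ i : I, f i ≤ H}

instance {G : Type*} [Group G] [Finite G] (p s : ℕ) (H : Subgroup G) (I : Finset ℕ) :
    Finite (SvChain p s H I) := by
  unfold SvChain; infer_instance

theorem sv_sigma_ext {G : Type*} [Group G] (p s : ℕ) (H : Subgroup G) (I : Finset ℕ) (c : ℕ)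
    (x y : Σ V : {V : Subgroup G // Nat.card V = p ^ (s - c) ∧ V ≤ H}, SvChain p s V.1 I)
    (h1 : x.1.1 = y.1.1) (h2 : x.2.1 = y.2.1) : x = y := by
  obtain ⟨⟨V, hV⟩, ⟨f, hf⟩⟩ := x
  obtain ⟨⟨W, hW⟩, ⟨g, hg⟩⟩ := y
  dsimp only at h1 h2
  subst h1
  subst h2
  rfl

theorem sv_chain_insert {G : Type*} [Group G] [Finite G] (p s : ℕ) (H : Subgroup G) (I : Finset ℕ)
    (c : ℕ) (hI : ∀ i ∈ I, c < i) :
    Nonempty (SvChain p s H (insert c I) ≃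
      Σ V : {V : Subgroup G // Nat.card V = p ^ (s - c) ∧ V ≤ H}, SvChain p s V.1 I) := by
  have hcI : c ∉ I := fun h => lt_irrefl _ (hI c h)
  refine ⟨⟨fun f => ⟨⟨f.1 ⟨c, Finset.mem_insert_self _ _⟩, f.2.1.2 _, f.2.2 _⟩,
    ⟨fun i => f.1 ⟨i.1, Finset.mem_insert_of_mem i.2⟩, ⟨fun i j h => f.2.1.1 _ _ h,
      fun i => f.2.1.2 _⟩, fun i => f.2.1.1 _ _ (hI i.1 i.2).le⟩⟩,
    fun x => ⟨fun i => if h : i.1 ∈ I then x.2.1 ⟨i.1, h⟩ else x.1.1, ⟨?_, ?_⟩, ?_⟩, ?_, ?_⟩⟩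
  · rintro ⟨i, hi⟩ ⟨j, hj⟩ hij
    dsimp only at hij ⊢
    split_ifs with h1 h2 h2
    · exact x.2.2.1.1 _ _ hij
    · exact x.2.2.2 _
    · have : j = c := (Finset.mem_insert.1 hj).resolve_right h1
      have := hI i h2
      omega
    · exact le_rfl
  · rintro ⟨i, hi⟩
    dsimp only
    split_ifs with h1
    · exact x.2.2.1.2 _
    · have : i = c := (Finset.mem_insert.1 hi).resolve_right h1
      rw [this]; exact x.1.2.1
  · rintro ⟨i, hi⟩
    dsimp only
    split_ifs with h1
    · exact (x.2.2.2 _).trans x.1.2.2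
    · exact x.1.2.2
  · intro f
    apply Subtype.ext
    funext ⟨i, hi⟩
    dsimp only
    split_ifs with h1
    · rfl
    · have : i = c := (Finset.mem_insert.1 hi).resolve_right h1
      subst this; rfl
  · rintro ⟨⟨V, hV⟩, ⟨f, hf⟩⟩
    have h1 : (if h : c ∈ I then f ⟨c, h⟩ else V) = V := dif_neg hcI
    have h2 : (fun i : I => if h : i.1 ∈ I then f ⟨i.1, h⟩ else V) = f := by
      funext i; exact dif_pos i.2
    exact sv_sigma_ext p s H I c _ _ h1 h2

/-- Signed sum of chain counts inside `H` with index sets in `[c, k)`. -/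
noncomputable def svT {G : Type*} [Group G] (p s k c : ℕ) (H : Subgroup G) : ℤ :=
  ∑ I ∈ (Finset.Ico c k).powerset, (-1 : ℤ) ^ I.card * (Nat.card (SvChain p s H I) : ℤ)

theorem sv_chain_empty {G : Type*} [Group G] (p s : ℕ) (H : Subgroup G) :
    Nat.card (SvChain p s H ∅) = 1 := by
  rw [Nat.card_eq_one_iff_unique]
  constructor
  · constructor
    intro f g
    apply Subtype.ext
    funext i
    exact absurd i.2 (Finset.notMem_empty _)
  · exact ⟨⟨fun i => ⊥, ⟨fun _ _ _ => le_rfl, fun i => absurd i.2 (Finset.notMem_empty _)⟩,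
      fun i => bot_le⟩⟩

theorem svT_self {G : Type*} [Group G] (p s k : ℕ) (H : Subgroup G) : svT p s k k H = 1 := by
  simp [svT, sv_chain_empty]

open Classical in
theorem svT_step {G : Type*} [Group G] [Finite G] [Fintype (Subgroup G)] (p s k c : ℕ) (hc : c < k)
    (H : Subgroup G) : svT p s k c H = svT p s k (c + 1) H -
      ∑ V ∈ Finset.univ.filter (fun V : Subgroup G => Nat.card V = p ^ (s - c) ∧ V ≤ H),
        svT p s k (c + 1) V := by
  have h1 : Finset.Ico c k = insert c (Finset.Ico (c + 1) k) := by
    ext x; simp; omega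
  have h2 : c ∉ Finset.Ico (c + 1) k := by simp
  unfold svT
  rw [h1, Finset.sum_powerset_insert h2, sub_eq_add_neg, Finset.sum_comm, ← Finset.sum_neg_distrib]
  congr 1
  refine Finset.sum_congr rfl fun I hI => ?_
  rw [Finset.mem_powerset] at hI
  have hcI : c ∉ I := fun h => h2 (hI h)
  rw [Finset.card_insert_of_notMem hcI]
  obtain ⟨e⟩ := sv_chain_insert p s H I c (fun i hi => by have := Finset.mem_Ico.1 (hI hi); omega)
  rw [Nat.card_congr e, Nat.card_sigma, ← Finset.mul_sum]
  rw [Finset.sum_subtype (p := fun V : Subgroup G => Nat.card V = p ^ (s - c) ∧ V ≤ H)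
    (Finset.univ.filter (fun V : Subgroup G => Nat.card V = p ^ (s - c) ∧ V ≤ H)) (by simp)]
  push_cast
  rw [pow_succ]
  ring

open Classical in
theorem svT_rec {G : Type*} [Group G] [Finite G] [Fintype (Subgroup G)] (p s : ℕ) (H : Subgroup G)
    (j : ℕ) : ∀ c k, k = c + j → svT p s k c H = 1 - ∑ b ∈ Finset.range j,
      ∑ V ∈ Finset.univ.filter (fun V : Subgroup G => Nat.card V = p ^ (s - (c + b)) ∧ V ≤ H),
        svT p s k (c + b + 1) V := by
  induction j with
  | zero => rintro c k rfl; simp [svT_self]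
  | succ j ih =>
    rintro c k hk
    rw [svT_step p s k c (by omega), ih (c + 1) k (by omega), Finset.sum_range_succ']
    simp only [add_zero]
    rw [sub_sub]
    congr 3
    funext b
    rw [show c + 1 + b = c + (b + 1) by ring]

open Classical in
theorem svT_zero {G : Type*} [Group G] [Finite G] [Fintype (Subgroup G)] (p s k : ℕ) (hp : p.Prime)
    (V : Subgroup G) (a : ℕ) : ∀ c, c + a < k → k ≤ s + 1 → Nat.card V = p ^ (s - (c + a)) →
      svT p s k c V = 0 := by
  induction a with
  | zero =>
    intro c hc hk hV
    rw [svT_step p s k c (by omega), sub_eq_zero]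
    rw [Finset.sum_eq_single V]
    · intro U hU hne
      simp only [Finset.mem_filter, Finset.mem_univ, true_and] at hU
      exact absurd (Subgroup.eq_of_le_of_card_ge hU.2 (by rw [hV, hU.1]; simp)) hne
    · intro h
      simp at h
      exact absurd hV h
  | succ a ih =>
    intro c hc hk hV
    rw [svT_step p s k c (by omega), ih (c + 1) (by omega) hk (by rw [hV]; congr 1; omega)]
    rw [Finset.sum_eq_zero, sub_zero]
    intro U hU
    simp only [Finset.mem_filter, Finset.mem_univ, true_and] at hU
    have h5 := Subgroup.card_le_of_le hU.2
    rw [hU.1, hV] at h5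
    have h6 := (Nat.pow_le_pow_iff_right hp.one_lt).1 h5
    omega

open Classical in
theorem sv_sum_sub {G : Type*} [Group G] [Fintype (Subgroup G)] (H : Subgroup G)
    [Fintype (Subgroup H)] (V : Subgroup H) (m : ℕ) (F : Subgroup G → ℤ) :
    ∑ U ∈ Finset.univ.filter (fun U : Subgroup H => Nat.card U = m ∧ U ≤ V), F (U.map H.subtype)
     = ∑ U ∈ Finset.univ.filter (fun U : Subgroup G => Nat.card U = m ∧ U ≤ V.map H.subtype),
        F U := by
  refine Finset.sum_bij (fun U _ => U.map H.subtype) ?_ ?_ ?_ ?_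
  · intro U hU
    simp only [Finset.mem_filter, Finset.mem_univ, true_and] at hU ⊢
    exact ⟨by rw [Subgroup.card_map_of_injective H.subtype_injective, hU.1],
      Subgroup.map_mono hU.2⟩
  · intro U _ U' _ h
    exact Subgroup.map_injective H.subtype_injective h
  · intro U hU
    simp only [Finset.mem_filter, Finset.mem_univ, true_and] at hU
    have hUH : U ≤ H := hU.2.trans (Subgroup.map_subtype_le V)
    have e : (U.subgroupOf H).map H.subtype = U := by
      rw [Subgroup.map_subgroupOf_eq_of_le hUH]
    refine ⟨U.subgroupOf H, ?_, e⟩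
    simp only [Finset.mem_filter, Finset.mem_univ, true_and]
    constructor
    · rw [← Subgroup.card_map_of_injective (f := H.subtype) H.subtype_injective, e, hU.1]
    · rw [← Subgroup.map_le_map_iff_of_injective H.subtype_injective, e]; exact hU.2
  · intro U _; rfl

open Classical in
theorem svT_dvd {G : Type*} [Group G] [Finite G] (p s k : ℕ) (hp : p.Prime) (hk : k ≤ s + 1)
    (j : ℕ) : ∀ c, k = c + j → ∀ (H : Subgroup G) (t n : ℕ), Nat.card H = p ^ t * n → ¬ p ∣ n →
      s - c ≤ t → (p : ℤ) ^ j ∣ svT p s k c H := by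
  induction j using Nat.strong_induction_on with
  | _ j ih =>
  intro c hc H t n hH hn hst
  rcases Nat.eq_zero_or_pos j with rfl | hj0
  · simp
  have : Fintype G := Fintype.ofFinite G
  have : Fintype H := Fintype.ofFinite H
  have : Fintype (Subgroup G) := Fintype.ofFinite _
  have : Fintype (Subgroup H) := Fintype.ofFinite _
  have h := sv_main (K := H) p t n (s - c) j hp hH hn hst (by omega)
    (fun b U => svT p s k (c + b + 1) (U.map H.subtype)) ?_ ?_
  · rw [svT_rec p s H j c k hc]
    have h2 := h.dvd
    convert h2 using 2
    refine Finset.sum_congr rfl fun b _ => ?_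
    have h3 := sv_sum_sub H ⊤ (p ^ (s - (c + b))) (svT p s k (c + b + 1))
    simp only [le_top, and_true] at h3
    rw [Nat.sub_sub, h3]
    rw [← MonoidHom.range_eq_map, Subgroup.range_subtype]
  · intro a ha V hV
    have h4 : svT p s k c (V.map H.subtype) = 0 := by
      apply svT_zero p s k hp _ a c (by omega) hk
      rw [Subgroup.card_map_of_injective H.subtype_injective, hV, Nat.sub_sub]
    rw [svT_rec p s _ j c k hc, sub_eq_zero] at h4
    rw [h4]
    refine Finset.sum_congr rfl fun b _ => ?_
    rw [← sv_sum_sub H V (p ^ (s - (c + b))) (svT p s k (c + b + 1)), Nat.sub_sub]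
  · intro b hb U hU
    apply ih (j - 1 - b) (by omega) (c + b + 1) (by omega) _ (s - (c + b)) 1
    · rw [Subgroup.card_map_of_injective H.subtype_injective, hU, Nat.sub_sub, mul_one]
    · exact hp.one_lt.ne' ∘ Nat.dvd_one.1
    · omega

theorem sieve_formula {G : Type*} [Group G] [Finite G] (p t n s l : ℕ)
    (hp : p.Prime) (hG : Nat.card G = p ^ t * n) (hn : ¬ p ∣ n)
    (hs : s ≤ t) (hl : l ≤ s) :
    (∑ I ∈ (Finset.range (l + 1)).powerset.filter (· ≠ ∅),
        (-1 : ℤ) ^ (I.card + 1) * (chainCount G p s I : ℤ))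
      ≡ 1 [ZMOD (p : ℤ) ^ (l + 1)] := by
  have h := svT_dvd (G := G) p s (l + 1) hp (by omega) (l + 1) 0 (by omega) ⊤ t n
    (by rw [Subgroup.card_top, hG]) hn (by omega)
  have hN : ∀ I, Nat.card (SvChain p s (⊤ : Subgroup G) I) = chainCount G p s I := by
    intro I
    apply Nat.card_congr
    exact Equiv.subtypeEquivRight (fun f => by simp)
  rw [Int.modEq_iff_dvd]
  convert h using 1
  unfold svT
  rw [Finset.filter_ne', ← Finset.range_eq_Ico,
    ← Finset.add_sum_erase _ _ (Finset.empty_mem_powerset (Finset.range (l + 1))),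
    sv_chain_empty, sub_eq_add_neg, ← Finset.sum_neg_distrib]
  congr 1
  · refine Finset.sum_congr rfl fun I _ => ?_
    rw [hN, pow_succ]
    ring
end

section
/- The number N(s) of subgroups of G of order p^s is congruent to 1 modulo p (Theorem of Sylow–Frobenius). -/
open scoped Pointwise in
theorem stab_card_dvd {G : Type*} [Group G] [Fintype G] [DecidableEq G] (A : Finset G) :
    Nat.card (MulAction.stabilizer G A) ∣ A.card := by
  classical
  set S : Finset G := Finset.univ.filter (· ∈ MulAction.stabilizer G A) with hS
  have hmem : ∀ x, x ∈ S ↔ x ∈ MulAction.stabilizer G A := fun x => by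
    rw [hS, Finset.mem_filter]; simp
  have h1 : S * A = A := by
    ext x
    rw [Finset.mem_mul]
    constructor
    · rintro ⟨y, hy, z, hz, rfl⟩
      exact (MulAction.mem_stabilizer_finset.1 ((hmem y).1 hy) z).2 hz
    · intro hx
      exact ⟨1, (hmem 1).2 (one_mem _), x, hx, one_mul x⟩
  have h2 : S.card = Nat.card (MulAction.stabilizer G A) := by
    rw [Nat.card_eq_fintype_card, Fintype.card_subtype]
  rw [← h2]
  conv_rhs => rw [← h1]
  apply Finset.card_dvd_card_mul_left
  rintro _ ⟨a, ha, rfl⟩ _ ⟨b, hb, rfl⟩ hab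
  simp only [Function.onFun, id]
  rw [Finset.disjoint_left]
  intro x hxa hxb
  apply hab
  simp only [Finset.mem_image] at hxa hxb
  obtain ⟨u, hu, rfl⟩ := hxa
  obtain ⟨v, hv, hvu⟩ := hxb
  have hb' : b = v⁻¹ * u * a := by rw [mul_assoc, ← hvu]; group
  have ha' : a = u⁻¹ * v * b := by rw [hb']; group
  rw [hmem] at hu hv
  ext y
  simp only [Finset.mem_image]
  constructor
  · rintro ⟨w, hw, rfl⟩
    rw [hmem] at hw
    exact ⟨w * (u⁻¹ * v), (hmem _).2 (mul_mem hw (mul_mem (inv_mem hu) hv)), by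
      rw [hb']; group⟩
  · rintro ⟨w, hw, rfl⟩
    rw [hmem] at hw
    exact ⟨w * (v⁻¹ * u), (hmem _).2 (mul_mem hw (mul_mem (inv_mem hv) hu)), by
      rw [hb']; group⟩

open scoped Pointwise in
theorem card_X1 {G : Type*} [Group G] [Fintype G] [DecidableEq G] (q m : ℕ) (hq : 0 < q)
    (hG : Nat.card G = q * m) :
    Nat.card {A : Finset G // A.card = q ∧ Nat.card (MulAction.stabilizer G A) = q} =
      Nat.card {U : Subgroup G // Nat.card U = q} * m := by
  classical
  -- the right coset `U g` as a finset
  obtain ⟨C, hC⟩ : ∃ C : Subgroup G → G → Finset G, ∀ U g x, x ∈ C U g ↔ x * g⁻¹ ∈ U :=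
    ⟨fun U g => Finset.univ.filter (fun x : G => x * g⁻¹ ∈ U), fun U g x => by simp⟩
  have key : ∀ (U : Subgroup G) (g : G),
      MulAction.stabilizer G (C U g) = U := by
    intro U g
    ext x
    rw [MulAction.mem_stabilizer_finset]
    simp only [hC, smul_eq_mul]
    constructor
    · intro h
      have := (h g).2 (by simp)
      simpa using this
    · intro hx b
      rw [mul_assoc]
      exact U.mul_mem_cancel_left hx
  have hcard : ∀ (U : Subgroup G) (g : G),
      (C U g).card = Nat.card U := by
    intro U g
    rw [Nat.card_eq_fintype_card, Fintype.card_subtype]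
    refine Finset.card_bij (fun x _ => x * g⁻¹) ?_ ?_ ?_
    · intro a ha; simpa [hC] using ha
    · intro a _ b _ h; simpa using h
    · intro b hb; exact ⟨b * g, by simpa [hC] using hb, by simp⟩
  let e : (Σ A : {A : Finset G // A.card = q ∧ Nat.card (MulAction.stabilizer G A) = q},
      {x : G // x ∈ A.1}) ≃ {U : Subgroup G // Nat.card U = q} × G :=
    { toFun := fun P => (⟨MulAction.stabilizer G P.1.1, P.1.2.2⟩, P.2.1)
      invFun := fun P => ⟨⟨C P.1.1 P.2, by
        rw [hcard]; exact P.1.2, by rw [key]; exact P.1.2⟩, ⟨P.2, by simp [hC]⟩⟩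
      left_inv := by
        rintro ⟨⟨A, hA, hA'⟩, a, ha⟩
        have hset : C (MulAction.stabilizer G A) a = A := by
          apply Finset.eq_of_subset_of_card_le
          · intro x hx
            rw [hC] at hx
            have := (MulAction.mem_stabilizer_finset.1 hx a).2 ha
            simpa using this
          · rw [hcard, hA, hA']
        have h1 : ∀ (B : Finset G) (hB : B.card = q ∧ Nat.card (MulAction.stabilizer G B) = q)
            (hb : a ∈ B), B = A →
            (⟨⟨B, hB⟩, ⟨a, hb⟩⟩ : Σ A : {A : Finset G // A.card = q ∧
              Nat.card (MulAction.stabilizer G A) = q}, {x : G // x ∈ A.1}) =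
              ⟨⟨A, hA, hA'⟩, ⟨a, ha⟩⟩ := by
          rintro B hB hb rfl; rfl
        exact h1 _ _ _ hset
      right_inv := by
        rintro ⟨⟨U, hU⟩, g⟩
        simp only [Prod.mk.injEq, Subtype.mk.injEq, and_true]
        exact key U g }
  have h := Nat.card_congr e
  rw [Nat.card_prod, hG, Nat.card_sigma] at h
  have h2 : ∀ A : {A : Finset G // A.card = q ∧ Nat.card (MulAction.stabilizer G A) = q},
      Nat.card {x : G // x ∈ A.1} = q := fun A => by
    rw [Nat.card_eq_fintype_card, Fintype.card_coe, A.2.1]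
  simp only [h2] at h
  rw [Finset.sum_const, smul_eq_mul, Finset.card_univ, ← Nat.card_eq_fintype_card] at h
  apply Nat.eq_of_mul_eq_mul_right hq
  rw [h]; ring

open scoped Pointwise in
theorem X2_dvd {G : Type*} [Group G] [Fintype G] [DecidableEq G] (p s m : ℕ) (hp : p.Prime)
    (hG : Nat.card G = p ^ s * m) :
    p * m ∣
    Nat.card {A : Finset G // A.card = p ^ s ∧ ¬ Nat.card (MulAction.stabilizer G A) = p ^ s} := by
  classical
  rw [Nat.card_eq_fintype_card, Fintype.card_subtype]
  rw [Finset.card_eq_sum_card_image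
    (fun A : Finset G => (Quotient.mk (MulAction.orbitRel G (Finset G)) A))]
  apply Finset.dvd_sum
  intro ω hω
  rw [Finset.mem_image] at hω
  obtain ⟨A, hA, rfl⟩ := hω
  simp only [Finset.mem_filter, Finset.mem_univ, true_and] at hA
  have h1 : (Finset.univ.filter (fun A : Finset G => A.card = p ^ s ∧
        ¬ Nat.card (MulAction.stabilizer G A) = p ^ s)).filter
        (fun B => Quotient.mk (MulAction.orbitRel G (Finset G)) B = Quotient.mk _ A) =
      (MulAction.orbit G A).toFinset := by
    ext B
    simp only [Finset.mem_filter, Finset.mem_univ, true_and, Set.mem_toFinset]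
    rw [Quotient.eq, MulAction.orbitRel_apply]
    refine ⟨fun h => h.2, fun h => ⟨?_, h⟩⟩
    obtain ⟨g, rfl⟩ := h
    simp only [Finset.card_smul_finset]
    refine ⟨hA.1, ?_⟩
    rw [Nat.card_congr (MulAction.stabilizerEquivStabilizer (g := g) (a := A) rfl).symm.toEquiv]
    exact hA.2
  rw [h1, Set.toFinset_card]
  have h2 := MulAction.card_orbit_mul_card_stabilizer_eq_card_group G A
  rw [← Nat.card_eq_fintype_card (α := G), hG, ← Nat.card_eq_fintype_card (α := MulAction.stabilizer G A)] at h2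
  have h3 := stab_card_dvd A
  rw [hA.1, Nat.dvd_prime_pow hp] at h3
  obtain ⟨j, hj, hj'⟩ := h3
  have hjs : j < s := lt_of_le_of_ne hj (by rintro rfl; exact hA.2 hj')
  obtain ⟨k, rfl⟩ := Nat.exists_eq_add_of_lt hjs
  rw [hj'] at h2
  have : Fintype.card (MulAction.orbit G A) = p ^ (k + 1) * m := by
    apply Nat.eq_of_mul_eq_mul_right (pow_pos hp.pos j)
    rw [h2]; ring
  rw [this]
  exact ⟨p ^ k, by ring⟩

open scoped Pointwise in
theorem count_choose {G : Type*} [Group G] [Finite G] (p s m : ℕ) (hp : p.Prime)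
    (hG : Nat.card G = p ^ s * m) :
    (p ^ s * m).choose (p ^ s) ≡ Nat.card {U : Subgroup G // Nat.card U = p ^ s} * m
      [MOD p * m] := by
  classical
  have := Fintype.ofFinite G
  have h0 : (p ^ s * m).choose (p ^ s) = Nat.card {A : Finset G // A.card = p ^ s} := by
    rw [Nat.card_eq_fintype_card, Fintype.card_finset_len, ← Nat.card_eq_fintype_card, hG]
  have h1 := card_X1 (G := G) (p ^ s) m (pow_pos hp.pos s) hG
  have h2 := X2_dvd (G := G) p s m hp hG
  have h3 : Nat.card {A : Finset G // A.card = p ^ s} =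
      Nat.card {A : Finset G // A.card = p ^ s ∧ Nat.card (MulAction.stabilizer G A) = p ^ s} +
      Nat.card {A : Finset G // A.card = p ^ s ∧
        ¬ Nat.card (MulAction.stabilizer G A) = p ^ s} := by
    rw [Nat.card_eq_fintype_card, Fintype.card_subtype,
      ← Finset.card_filter_add_card_filter_not
        (fun A : Finset G => Nat.card (MulAction.stabilizer G A) = p ^ s),
      Finset.filter_filter, Finset.filter_filter, ← Fintype.card_subtype, ← Fintype.card_subtype,
      ← Nat.card_eq_fintype_card, ← Nat.card_eq_fintype_card]
  rw [h0, h3, h1]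
  exact (Nat.ModEq.add_left _ ((Nat.modEq_zero_iff_dvd).2 h2))

theorem cyclic_count (p s m : ℕ) (hp : p.Prime) (hm : 0 < m) :
    Nat.card {U : Subgroup (Multiplicative (ZMod (p ^ s * m))) // Nat.card U = p ^ s} = 1 := by
  classical
  have hpos : 0 < p ^ s * m := Nat.mul_pos (pow_pos hp.pos s) hm
  have : NeZero (p ^ s * m) := ⟨hpos.ne'⟩
  have : Fact p.Prime := ⟨hp⟩
  have hc : Nat.card (Multiplicative (ZMod (p ^ s * m))) = p ^ s * m := by
    simp
  have hfix : ∀ U : Subgroup (Multiplicative (ZMod (p ^ s * m))), Nat.card U = p ^ s →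
      Finset.univ.filter (· ∈ U) = Finset.univ.filter (fun x => x ^ (p ^ s) = 1) := by
    intro U hU
    apply Finset.eq_of_subset_of_card_le
    · intro x hx
      simp only [Finset.mem_filter, Finset.mem_univ, true_and] at hx ⊢
      have := pow_card_eq_one' (x := (⟨x, hx⟩ : U))
      rw [hU] at this
      simpa using congrArg Subtype.val this
    · have hUc : (Finset.univ.filter (· ∈ U)).card = p ^ s := by
        rw [← Fintype.card_subtype, ← Nat.card_eq_fintype_card]; exact hU
      rw [hUc]
      exact IsCyclic.card_pow_eq_one_le (pow_pos hp.pos s)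
  rw [Nat.card_eq_one_iff_unique]
  constructor
  · constructor
    rintro ⟨U, hU⟩ ⟨V, hV⟩
    have h := (hfix U hU).trans (hfix V hV).symm
    rw [Subtype.mk.injEq]
    ext x
    have := Finset.ext_iff.1 h x
    simpa using this
  · obtain ⟨K, hK⟩ := Sylow.exists_subgroup_card_pow_prime
      (G := Multiplicative (ZMod (p ^ s * m))) p (n := s) (by rw [hc]; exact dvd_mul_right _ _)
    exact ⟨⟨K, hK⟩⟩

/-- **Theorem of Sylow–Frobenius.** Let `G` be a finite group and `p` a prime with
`|G| = p^t * n` and `p ∤ n`. For `s ∈ [0, t]`, the number of subgroups of `G` of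
order `p^s` is congruent to `1` modulo `p`. -/
theorem sylow_frobenius {G : Type*} [Group G] [Finite G] (p t n s : ℕ)
    (hp : p.Prime) (hG : Nat.card G = p ^ t * n) (hn : ¬ p ∣ n) (hs : s ≤ t) :
    Nat.card {U : Subgroup G // Nat.card U = p ^ s} ≡ 1 [MOD p] := by
  obtain ⟨r, rfl⟩ := Nat.exists_eq_add_of_le hs
  have hn0 : 0 < n := Nat.pos_of_ne_zero (by rintro rfl; exact hn (dvd_zero p))
  have hm : 0 < p ^ r * n := Nat.mul_pos (pow_pos hp.pos r) hn0
  rw [pow_add, mul_assoc] at hG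
  generalize p ^ r * n = m at hG hm
  have h1 := count_choose p s m hp hG
  have : NeZero (p ^ s * m) := ⟨(Nat.mul_pos (pow_pos hp.pos s) hm).ne'⟩
  have h2 := count_choose (G := Multiplicative (ZMod (p ^ s * m))) p s m hp (by simp)
  rw [cyclic_count p s m hp hm] at h2
  exact Nat.ModEq.mul_right_cancel' hm.ne' (h1.symm.trans h2)
end

section
/- For every l ∈ [0, s]: a_l = (1/p^l) · Σ_{I ⊆ [0, l], l ∈ I} (-1)^{|I|+1} · b(min I) · N(s−I). -/
open Pointwise

/-- `orbitCount G p s t n k` is the number `a_k` of orbits of length `p^(t-s+k)·n`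
of the action of `G` on its `p^s`-element subsets by left multiplication. -/
noncomputable def orbitCount (G : Type*) [Group G] (p s t n k : ℕ) : ℕ :=
  Nat.card {O : Set (Set G) //
    (∃ M : Set G, Nat.card M = p ^ s ∧ O = MulAction.orbit G M) ∧
    Nat.card O = p ^ (t - s + k) * n}

/-- `bCoeff p t s n k` is the binomial coefficient `b(k) = C(p^(t-s+k)·n - 1, p^k - 1)`,
as an integer. -/
def bCoeff (p t s n k : ℕ) : ℤ :=
  (Nat.choose (p ^ (t - s + k) * n - 1) (p ^ k - 1) : ℤ)

open scoped Classical in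
/-- Chains below a fixed subgroup `S`. -/
noncomputable def chainBelow (G : Type*) [Group G] (p s : ℕ) (I : Finset ℕ) (S : Subgroup G) : ℕ :=
  Nat.card {f : I → Subgroup G //
    ((∀ i j : I, (i : ℕ) ≤ (j : ℕ) → f j ≤ f i) ∧
    ∀ i : I, Nat.card (f i) = p ^ (s - (i : ℕ))) ∧ ∀ i : I, f i ≤ S}

/-- The left `U`-invariant set attached to a set of cosets. -/
def liftSet {G : Type*} [Group G] (U : Subgroup G) (T : Set (G ⧸ U)) : Set G :=
  {g | ((g⁻¹ : G) : G ⧸ U) ∈ T}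

theorem liftSet_injective {G : Type*} [Group G] (U : Subgroup G) :
    Function.Injective (liftSet U) := by
  intro T T' h
  ext x
  induction x using QuotientGroup.induction_on with
  | H z =>
    have := Set.ext_iff.mp h z⁻¹
    simpa [liftSet] using this

theorem le_stabilizer_liftSet {G : Type*} [Group G] (U : Subgroup G) (T : Set (G ⧸ U)) :
    U ≤ MulAction.stabilizer G (liftSet U T) := by
  intro u hu
  rw [MulAction.mem_stabilizer_iff]
  ext g
  rw [Set.mem_smul_set_iff_inv_smul_mem]
  have : (((u⁻¹ • g)⁻¹ : G) : G ⧸ U) = ((g⁻¹ : G) : G ⧸ U) := by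
    rw [QuotientGroup.eq]
    simpa using U.inv_mem hu
  change (((u⁻¹ • g)⁻¹ : G) : G ⧸ U) ∈ T ↔ ((g⁻¹ : G) : G ⧸ U) ∈ T
  rw [this]

theorem exists_liftSet {G : Type*} [Group G] (U : Subgroup G) (M : Set G)
    (h : U ≤ MulAction.stabilizer G M) : ∃ T, liftSet U T = M := by
  refine ⟨(fun g : G => (g : G ⧸ U)) '' M⁻¹, ?_⟩
  ext g
  change (∃ x, x ∈ M⁻¹ ∧ (x : G ⧸ U) = ((g⁻¹ : G) : G ⧸ U)) ↔ g ∈ M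
  constructor
  · rintro ⟨x, hx, hxg⟩
    have h1 := h (QuotientGroup.eq.mp hxg)
    rw [MulAction.mem_stabilizer_iff] at h1
    have h2 : (x⁻¹ * g⁻¹) • g ∈ M := by simpa using hx
    rw [← h1, Set.smul_mem_smul_set_iff] at h2
    exact h2
  · intro hg
    exact ⟨g⁻¹, by simpa using hg, rfl⟩

theorem card_liftSet {G : Type*} [Group G] (U : Subgroup G) (T : Set (G ⧸ U)) :
    Nat.card (liftSet U T) = Nat.card U * Nat.card T := by
  rw [← Nat.card_prod, ← Nat.card_congr (QuotientGroup.preimageMkEquivSubgroupProdSet U T)]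
  refine Nat.card_congr ⟨fun x => ⟨x.1⁻¹, x.2⟩, fun x => ⟨x.1⁻¹, ?_⟩, ?_, ?_⟩
  · change (((x.1⁻¹)⁻¹ : G) : G ⧸ U) ∈ T
    rw [inv_inv]
    exact x.2
  · intro x; simp
  · intro x; simp

theorem card_invariant {G : Type*} [Group G] [Finite G] (p t n s m : ℕ)
    (hp : p.Prime) (hG : Nat.card G = p ^ t * n) (hs : s ≤ t) (hm : m ≤ s)
    (U : Subgroup G) (hU : Nat.card U = p ^ (s - m)) :
    Nat.card {M : Set G // Nat.card M = p ^ s ∧ U ≤ MulAction.stabilizer G M} =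
      Nat.choose (p ^ (t - s + m) * n) (p ^ m) := by
  have hpos : 0 < p ^ (s - m) := pow_pos hp.pos _
  have hq : Nat.card (G ⧸ U) = p ^ (t - s + m) * n := by
    have h := Subgroup.card_eq_card_quotient_mul_card_subgroup U
    rw [hG, hU] at h
    apply Nat.eq_of_mul_eq_mul_right hpos
    rw [← h, mul_right_comm, ← pow_add]
    congr 2
    omega
  rw [← hq]
  have hsm : p ^ s = p ^ (s - m) * p ^ m := by
    rw [← pow_add]; congr 1; omega
  have e : {T : Set (G ⧸ U) // Nat.card T = p ^ m} ≃
      {M : Set G // Nat.card M = p ^ s ∧ U ≤ MulAction.stabilizer G M} := by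
    refine Equiv.ofBijective (fun T => ⟨liftSet U T.1, ?_, le_stabilizer_liftSet U T.1⟩) ⟨?_, ?_⟩
    · rw [card_liftSet, hU, T.2, hsm]
    · intro T T' h
      exact Subtype.ext (liftSet_injective U (congrArg Subtype.val h))
    · rintro ⟨M, hM, hUM⟩
      obtain ⟨T, rfl⟩ := exists_liftSet U M hUM
      refine ⟨⟨T, ?_⟩, rfl⟩
      rw [card_liftSet, hU, hsm] at hM
      exact Nat.eq_of_mul_eq_mul_left hpos hM
  rw [← Nat.card_congr e]
  have := Set.powersetCard.card (α := G ⧸ U) (n := p ^ m)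
  rw [← this]
  have := Fintype.ofFinite (G ⧸ U)
  refine Nat.card_congr ⟨fun T => ⟨T.1.toFinite.toFinset, ?_⟩, fun T => ⟨T.1, ?_⟩, ?_, ?_⟩
  · have := T.2
    rw [Nat.card_coe_set_eq, Set.ncard_eq_toFinset_card T.1 T.1.toFinite] at this
    simpa using this
  · have h : T.1.card = p ^ m := T.2
    rw [Nat.card_coe_set_eq, Set.ncard_coe_finset, h]
  · intro T
    apply Subtype.ext
    simp
  · intro T
    apply Subtype.ext
    ext x
    exact Set.Finite.mem_toFinset _

theorem card_stabilizer_dvd {G : Type*} [Group G] (M : Set G) :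
    Nat.card (MulAction.stabilizer G M) ∣ Nat.card M := by
  obtain ⟨T, hT⟩ := exists_liftSet _ M le_rfl
  have := card_liftSet (MulAction.stabilizer G M) T
  rw [hT] at this
  exact ⟨_, this⟩

theorem card_orbits {G : Type*} [Group G] [Finite G] (p t n s l : ℕ)
    (hp : p.Prime) (hG : Nat.card G = p ^ t * n) (hn : 0 < n)
    (hs : s ≤ t) (hl : l ≤ s) :
    Nat.card {M : Set G // Nat.card M = p ^ s ∧
      Nat.card (MulAction.stabilizer G M) = p ^ (s - l)} =
    orbitCount G p s t n l * (p ^ (t - s + l) * n) := by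
  have hGG : Nat.card G = (p ^ (t - s + l) * n) * p ^ (s - l) := by
    rw [hG, mul_right_comm, ← pow_add]
    congr 2
    omega
  have hiff : ∀ M : Set G, Nat.card (MulAction.orbit G M) = p ^ (t - s + l) * n ↔
      Nat.card (MulAction.stabilizer G M) = p ^ (s - l) := by
    intro M
    have h : Nat.card (MulAction.orbit G M) * Nat.card (MulAction.stabilizer G M) = Nat.card G := by
      rw [Nat.card_coe_set_eq, ← MulAction.index_stabilizer, Subgroup.index_mul_card]
    rw [hGG] at h
    constructor
    · intro h1
      rw [h1] at h
      exact Nat.eq_of_mul_eq_mul_left (Nat.mul_pos (pow_pos hp.pos _) hn) h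
    · intro h1
      rw [h1] at h
      exact Nat.eq_of_mul_eq_mul_right (pow_pos hp.pos _) h
  have hcard : ∀ (M : Set G) (g : G), Nat.card (g • M : Set G) = Nat.card M := by
    intro M g
    rw [Nat.card_coe_set_eq, Nat.card_coe_set_eq, Set.ncard_smul_set]
  have e : {M : Set G // Nat.card M = p ^ s ∧
      Nat.card (MulAction.stabilizer G M) = p ^ (s - l)} ≃
      Σ O : {O : Set (Set G) //
        (∃ M : Set G, Nat.card M = p ^ s ∧ O = MulAction.orbit G M) ∧
        Nat.card O = p ^ (t - s + l) * n}, O.1 := by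
    refine ⟨fun M => ⟨⟨MulAction.orbit G M.1, ⟨M.1, M.2.1, rfl⟩, (hiff _).2 M.2.2⟩,
      ⟨M.1, MulAction.mem_orbit_self _⟩⟩, fun x => ⟨x.2.1, ?_⟩, ?_, ?_⟩
    · obtain ⟨⟨O, ⟨M, hM, rfl⟩, hO⟩, ⟨N, hN⟩⟩ := x
      have h1 := MulAction.orbit_eq_iff.mpr hN
      refine ⟨?_, ?_⟩
      · obtain ⟨g, rfl⟩ := hN
        simpa [hcard] using hM
      · rw [← hiff, h1]; exact hO
    · intro M; rfl
    · rintro ⟨⟨O, ⟨M, hM, rfl⟩, hO⟩, ⟨N, hN⟩⟩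
      have h1 := MulAction.orbit_eq_iff.mpr hN
      refine Sigma.subtype_ext (Subtype.ext h1) rfl
  have := Fintype.ofFinite {O : Set (Set G) //
        (∃ M : Set G, Nat.card M = p ^ s ∧ O = MulAction.orbit G M) ∧
        Nat.card O = p ^ (t - s + l) * n}
  rw [Nat.card_congr e, Nat.card_sigma, Finset.sum_congr rfl (fun O _ => O.2.2),
    Finset.sum_const, smul_eq_mul, Finset.card_univ, orbitCount, Nat.card_eq_fintype_card]

theorem chainBelow_eq_zero {G : Type*} [Group G] [Finite G] (p s c : ℕ) (hp : p.Prime)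
    (hc : c ≤ s) (S : Subgroup G) (hS : Nat.card S = p ^ (s - c)) (I : Finset ℕ) (i : ℕ)
    (hi : i ∈ I) (hic : i < c) : chainBelow G p s I S = 0 := by
  unfold chainBelow
  rw [Nat.card_eq_zero]
  left
  constructor
  rintro ⟨f, ⟨-, h2⟩, h3⟩
  have h4 := Subgroup.card_le_of_le (h3 ⟨i, hi⟩)
  rw [h2, hS] at h4
  have := (Nat.pow_le_pow_iff_right hp.one_lt).mp h4
  simp only at this
  omega

theorem chainBelow_insert {G : Type*} [Group G] [Finite G] (p s c : ℕ)
    (S : Subgroup G) (hS : Nat.card S = p ^ (s - c)) (I : Finset ℕ)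
    (hI : ∀ i ∈ I, c ≤ i) (hcI : c ∉ I) :
    chainBelow G p s (insert c I) S = chainBelow G p s I S := by
  unfold chainBelow
  refine Nat.card_eq_of_bijective (fun f => ⟨fun i => f.1 ⟨i.1, Finset.mem_insert_of_mem i.2⟩,
    ⟨fun i j h => f.2.1.1 _ _ h, fun i => f.2.1.2 _⟩, fun i => f.2.2 _⟩) ⟨?_, ?_⟩
  · have key : ∀ f : {f : ↥(insert c I : Finset ℕ) → Subgroup G //
        ((∀ i j : (insert c I : Finset ℕ), (i : ℕ) ≤ (j : ℕ) → f j ≤ f i) ∧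
        ∀ i : (insert c I : Finset ℕ), Nat.card (f i) = p ^ (s - (i : ℕ))) ∧
        ∀ i : (insert c I : Finset ℕ), f i ≤ S},
        f.1 ⟨c, Finset.mem_insert_self _ _⟩ = S := by
      intro f
      apply Subgroup.eq_of_le_of_card_ge (f.2.2 _)
      rw [hS, f.2.1.2]
    intro f f' h
    apply Subtype.ext
    funext ⟨i, hi⟩
    rcases Finset.mem_insert.mp hi with rfl | hi'
    · rw [key f, key f']
    · exact congrFun (congrArg Subtype.val h) ⟨i, hi'⟩
  · rintro ⟨f, ⟨h1, h2⟩, h3⟩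
    refine ⟨⟨fun i => if h : i.1 ∈ I then f ⟨i.1, h⟩ else S, ⟨?_, ?_⟩, ?_⟩, ?_⟩
    · rintro ⟨i, hi⟩ ⟨j, hj⟩ hij
      simp only at hij
      by_cases h : i ∈ I
      · by_cases h' : j ∈ I
        · simp only [h, h', dite_true]
          exact h1 _ _ hij
        · exfalso
          have hjc : j = c := (Finset.mem_insert.mp hj).resolve_right h'
          have := hI i h
          have : i = c := by omega
          exact hcI (this ▸ h)
      · by_cases h' : j ∈ I
        · simp only [h, h', dite_true, dite_false]
          exact h3 _
        · simp only [h, h', dite_false]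
          exact le_rfl
    · rintro ⟨i, hi⟩
      by_cases h : i ∈ I
      · simp only [h, dite_true]
        exact h2 _
      · have hic : i = c := (Finset.mem_insert.mp hi).resolve_right h
        simp only [h, dite_false]
        rw [hS, hic]
    · rintro ⟨i, hi⟩
      by_cases h : i ∈ I
      · simp only [h, dite_true]
        exact h3 _
      · simp only [h, dite_false]
        exact le_rfl
    · apply Subtype.ext
      funext ⟨i, hi⟩
      simp [hi]

theorem chainBelow_empty {G : Type*} [Group G] [Finite G] (p s : ℕ) (S : Subgroup G) :
    chainBelow G p s ∅ S = 1 := by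
  unfold chainBelow
  rw [Nat.card_eq_one_iff_unique]
  refine ⟨⟨fun f f' => Subtype.ext (funext fun i => ?_)⟩, ⟨⟨fun _ => ⊥, ⟨?_, ?_⟩, ?_⟩⟩⟩
  · exact absurd i.2 (Finset.notMem_empty _)
  · intro i; exact absurd i.2 (Finset.notMem_empty _)
  · intro i; exact absurd i.2 (Finset.notMem_empty _)
  · intro i; exact absurd i.2 (Finset.notMem_empty _)

/-- The alternating sum of chains below a fixed `S`. -/
theorem alternating_chainBelow {G : Type*} [Group G] [Finite G] (p s l c : ℕ) (hp : p.Prime)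
    (hc : c ≤ s) (hl : l ≤ s) (S : Subgroup G) (hS : Nat.card S = p ^ (s - c)) :
    ∑ I ∈ (Finset.range (l + 1)).powerset.filter (fun I => l ∈ I),
      (-1 : ℤ) ^ (I.card + 1) * (chainBelow G p s I S : ℤ) = if c = l then 1 else 0 := by
  rcases lt_trichotomy c l with h | h | h
  · rw [if_neg h.ne]
    refine Finset.sum_involution (fun I _ => if c ∈ I then I.erase c else insert c I)
      ?_ ?_ ?_ ?_
    · intro I hI
      by_cases hbad : ∃ i ∈ I, i < c
      · obtain ⟨i, hi, hic⟩ := hbad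
        rw [chainBelow_eq_zero p s c hp hc S hS I i hi hic,
          chainBelow_eq_zero p s c hp hc S hS _ i _ hic]
        · simp
        · split_ifs
          · exact Finset.mem_erase.mpr ⟨hic.ne, hi⟩
          · exact Finset.mem_insert_of_mem hi
      · push Not at hbad
        by_cases hcI : c ∈ I
        · simp only [hcI, if_true]
          have h1 := chainBelow_insert p s c S hS (I.erase c)
            (fun i hi => hbad i (Finset.mem_of_mem_erase hi)) (Finset.notMem_erase _ _)
          rw [Finset.insert_erase hcI] at h1
          rw [h1, ← Finset.card_erase_add_one hcI]
          ring
        · simp only [hcI, if_false]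
          rw [chainBelow_insert p s c S hS I hbad hcI, Finset.card_insert_of_notMem hcI]
          ring
    · intro I hI _ heq
      by_cases hcI : c ∈ I
      · simp only [hcI, if_true] at heq
        exact Finset.notMem_erase c I (heq.symm ▸ hcI)
      · simp only [hcI, if_false] at heq
        exact hcI (heq ▸ Finset.mem_insert_self c I)
    · intro I hI
      rw [Finset.mem_filter, Finset.mem_powerset] at hI ⊢
      split_ifs with hcI
      · exact ⟨(Finset.erase_subset _ _).trans hI.1, Finset.mem_erase.mpr ⟨h.ne', hI.2⟩⟩
      · exact ⟨Finset.insert_subset (Finset.mem_range.mpr (by omega)) hI.1,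
          Finset.mem_insert_of_mem hI.2⟩
    · intro I hI
      by_cases hcI : c ∈ I
      · simp [hcI, Finset.insert_erase]
      · simp [hcI, Finset.erase_insert]
  · subst h
    rw [if_pos rfl, Finset.sum_eq_single {c}]
    · have h1 := chainBelow_insert p s c S hS ∅ (by simp) (by simp)
      rw [chainBelow_empty] at h1
      have h2 : (insert c ∅ : Finset ℕ) = {c} := rfl
      rw [h2] at h1
      simp [h1]
    · intro I hI hne
      rw [Finset.mem_filter, Finset.mem_powerset] at hI
      have : ∃ i ∈ I, i ≠ c := by
        by_contra hcon
        push Not at hcon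
        apply hne
        ext i
        rw [Finset.mem_singleton]
        exact ⟨hcon i, fun h => h ▸ hI.2⟩
      obtain ⟨i, hi, hic⟩ := this
      have := Finset.mem_range.mp (hI.1 hi)
      rw [chainBelow_eq_zero p s c hp hc S hS I i hi (by omega)]
      simp
    · intro hcon
      exfalso
      apply hcon
      simp
  · rw [if_neg h.ne']
    apply Finset.sum_eq_zero
    intro I hI
    rw [Finset.mem_filter] at hI
    rw [chainBelow_eq_zero p s c hp hc S hS I l hI.2 h]
    simp

open scoped Classical in
theorem double_count {G : Type*} [Group G] [Finite G] [Fintype (Set G)] (p t n s : ℕ)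
    (hp : p.Prime) (hG : Nat.card G = p ^ t * n) (hs : s ≤ t) (I : Finset ℕ)
    (hI : I.Nonempty) (hIs : I.min' hI ≤ s) :
    chainCount G p s I * Nat.choose (p ^ (t - s + I.min' hI) * n) (p ^ (I.min' hI)) =
      ∑ M ∈ Finset.univ.filter (fun M : Set G => Nat.card M = p ^ s), chainBelow G p s I (MulAction.stabilizer G M) := by
  have := Fintype.ofFinite (I → Subgroup G)
  have hle : ∀ (f : I → Subgroup G) (S : Subgroup G),
      (∀ i j : I, (i : ℕ) ≤ (j : ℕ) → f j ≤ f i) →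
      ((∀ i, f i ≤ S) ↔ f ⟨I.min' hI, I.min'_mem hI⟩ ≤ S) := by
    intro f S h
    exact ⟨fun h' => h' _, fun h' i => (h _ i (I.min'_le i.1 i.2)).trans h'⟩
  have h1 := Finset.sum_card_bipartiteAbove_eq_sum_card_bipartiteBelow
    (s := Finset.univ.filter (fun f : I → Subgroup G =>
      (∀ i j : I, (i : ℕ) ≤ (j : ℕ) → f j ≤ f i) ∧
      ∀ i : I, Nat.card (f i) = p ^ (s - (i : ℕ))))
    (t := Finset.univ.filter (fun M : Set G => Nat.card M = p ^ s))
    (fun f M => ∀ i, f i ≤ MulAction.stabilizer G M)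
  have h2 : ∀ M : Set G, chainBelow G p s I (MulAction.stabilizer G M) = _ := fun M => by
    unfold chainBelow
    rw [Nat.card_eq_fintype_card, Fintype.card_subtype, ← Finset.filter_filter]
  simp only [h2]
  unfold Finset.bipartiteBelow at h1
  rw [← h1]
  unfold chainCount
  rw [Nat.card_eq_fintype_card, Fintype.card_subtype, ← smul_eq_mul, eq_comm]
  apply Finset.sum_const_nat
  intro f hf
  rw [Finset.mem_filter] at hf
  have h3 := card_invariant p t n s _ hp hG hs hIs _ (hf.2.2 ⟨I.min' hI, I.min'_mem hI⟩)
  rw [← h3, Nat.card_eq_fintype_card, Fintype.card_subtype, ← Finset.filter_filter]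
  unfold Finset.bipartiteAbove
  simp only [hle f _ hf.2.1]

/-- The formula for the number `a_l` of orbits of length `p^(t-s+l)·n`:
`a_l = (1/p^l) · ∑_{I ⊆ [0,l], l ∈ I} (-1)^(|I|+1) · b(min I) · N(s - I)`,
stated multiplied through by `p^l`. -/
theorem orbitCount_eq_alternating_sum {G : Type*} [Group G] [Finite G] (p t n s l : ℕ)
    (hp : p.Prime) (hG : Nat.card G = p ^ t * n) (hn : ¬ p ∣ n)
    (hs : s ≤ t) (hl : l ≤ s) :
    (orbitCount G p s t n l : ℤ) * p ^ l =
      ∑ I ∈ ((Finset.range (l + 1)).powerset.filter (fun I => l ∈ I)).attach,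
        (-1 : ℤ) ^ (I.1.card + 1) *
          bCoeff p t s n (I.1.min' ⟨l, (Finset.mem_filter.mp I.2).2⟩) *
          (chainCount G p s I.1 : ℤ) := by
  classical
  have := Fintype.ofFinite (Set G)
  have hn0 : 0 < n := by
    rcases Nat.eq_zero_or_pos n with h | h
    · exact absurd (h ▸ dvd_zero p) hn
    · exact h
  have hchoose : ∀ m, Nat.choose (p ^ (t - s + m) * n) (p ^ m) =
      p ^ (t - s) * n * Nat.choose (p ^ (t - s + m) * n - 1) (p ^ m - 1) := by
    intro m
    have hpm : 0 < p ^ m := pow_pos hp.pos _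
    have hN : 0 < p ^ (t - s + m) * n := Nat.mul_pos (pow_pos hp.pos _) hn0
    have h := Nat.add_one_mul_choose_eq (p ^ (t - s + m) * n - 1) (p ^ m - 1)
    rw [Nat.sub_add_cancel hN, Nat.sub_add_cancel hpm] at h
    apply Nat.eq_of_mul_eq_mul_right hpm
    rw [← h, pow_add]
    ring
  have hK : ((p : ℤ) ^ (t - s) * n) ≠ 0 := by
    have := hp.pos
    positivity
  apply mul_left_cancel₀ hK
  have hL : (p : ℤ) ^ (t - s) * n * ((orbitCount G p s t n l : ℤ) * p ^ l) =
      ∑ M ∈ Finset.univ.filter (fun M : Set G => Nat.card M = p ^ s),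
        if Nat.card (MulAction.stabilizer G M) = p ^ (s - l) then (1 : ℤ) else 0 := by
    have h := card_orbits p t n s l hp hG hn0 hs hl
    rw [Nat.card_eq_fintype_card, Fintype.card_subtype, ← Finset.filter_filter] at h
    rw [Finset.sum_boole, h]
    push_cast
    ring
  rw [hL, Finset.mul_sum]
  have hR : ∀ M ∈ Finset.univ.filter (fun M : Set G => Nat.card M = p ^ s),
      (if Nat.card (MulAction.stabilizer G M) = p ^ (s - l) then (1 : ℤ) else 0) =
      ∑ I ∈ ((Finset.range (l + 1)).powerset.filter (fun I => l ∈ I)).attach,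
        (-1 : ℤ) ^ (I.1.card + 1) * (chainBelow G p s I.1 (MulAction.stabilizer G M) : ℤ) := by
    intro M hM
    rw [Finset.mem_filter] at hM
    have hd := card_stabilizer_dvd M
    rw [hM.2, Nat.dvd_prime_pow hp] at hd
    obtain ⟨k, hk, hk'⟩ := hd
    have hk2 : Nat.card (MulAction.stabilizer G M) = p ^ (s - (s - k)) := by
      rw [hk']; congr 1; omega
    rw [Finset.sum_attach _ (fun I : Finset ℕ => (-1 : ℤ) ^ (I.card + 1) *
      (chainBelow G p s I (MulAction.stabilizer G M) : ℤ)),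
      alternating_chainBelow p s l (s - k) hp (Nat.sub_le _ _) hl _ hk2, hk2]
    have : p ^ (s - (s - k)) = p ^ (s - l) ↔ s - k = l := by
      rw [Nat.pow_right_inj hp.one_lt]
      omega
    simp only [this]
  rw [Finset.sum_congr rfl hR, Finset.sum_comm]
  apply Finset.sum_congr rfl
  intro I _
  have hI := Finset.mem_filter.mp I.2
  have hmin : I.1.min' ⟨l, hI.2⟩ ≤ s := (I.1.min'_le l hI.2).trans hl
  have h := double_count p t n s hp hG hs I.1 ⟨l, hI.2⟩ hmin
  rw [hchoose] at h
  rw [← Finset.mul_sum, ← Nat.cast_sum, ← h]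
  unfold bCoeff
  push_cast
  ring
end

section
/- Let l ∈ [0, s], k ∈ [0, l] and Î ⊆ [l, s]. Summing over all pairs (U, M), where U ≤ G with |U| = p^{s−l}, M ⊆ G with 1 ∈ M, |M| = p^s, |Stab(M)| = p^{s−k}, and M is a union of right cosets of U, the number of chains of subgroups of U whose orders are p^{s−i} for i ∈ Î (in increasing order), one obtains Σ_{I ⊆ [0, k], k ∈ I} (-1)^{|I|+1} · b(min I) · N(s − (I ∪ {l} ∪ Î)). -/
open Pointwise

open Classical in
/-- minimum, with a default -/
noncomputable def myMin (I : Finset ℕ) : ℕ := if h : I.Nonempty then I.min' h else 0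

/-- chain condition -/
def IsCh {G : Type*} [Group G] (p s : ℕ) {J : Finset ℕ} (f : J → Subgroup G) : Prop :=
  (∀ i j : J, (i : ℕ) ≤ (j : ℕ) → f j ≤ f i) ∧
    ∀ i : J, Nat.card (f i) = p ^ (s - (i : ℕ))

/-- all pairs -/
def IsB {G : Type*} [Group G] (p s : ℕ) {J : Finset ℕ} (x : Set G × (J → Subgroup G)) : Prop :=
  (1 : G) ∈ x.1 ∧ Nat.card x.1 = p ^ s ∧ IsCh p s x.2 ∧
    ∀ i, x.2 i ≤ MulAction.stabilizer G x.1

/-- number of pairs with stabilizer of fixed order -/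
noncomputable def cA (G : Type*) [Group G] (p s k : ℕ) (J : Finset ℕ) : ℕ :=
  Nat.card {x : Set G × (J → Subgroup G) //
    IsB p s x ∧ Nat.card (MulAction.stabilizer G x.1) = p ^ (s - k)}

/-- number of all pairs -/
noncomputable def cB (G : Type*) [Group G] (p s : ℕ) (J : Finset ℕ) : ℕ :=
  Nat.card {x : Set G × (J → Subgroup G) // IsB p s x}

/-- the alternating sum -/
noncomputable def cF (G : Type*) [Group G] (p t s n k : ℕ) (J : Finset ℕ) : ℤ :=
  ∑ I ∈ (Finset.range (k + 1)).powerset.filter (fun I => k ∈ I),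
    (-1 : ℤ) ^ (I.card + 1) * bCoeff p t s n (myMin I) * (chainCount G p s (I ∪ J) : ℤ)

lemma myMin_insert (k : ℕ) (I : Finset ℕ) (hI : I.Nonempty) (h : ∀ i ∈ I, i < k) :
    myMin (insert k I) = myMin I := by
  have h2 : (insert k I).Nonempty := ⟨k, by simp⟩
  rw [myMin, myMin, dif_pos h2, dif_pos hI, Finset.min'_insert k I hI]
  exact min_eq_right (h _ (Finset.min'_mem _ _)).le

lemma cF_rec (G : Type*) [Group G] (p t s n k : ℕ) (J : Finset ℕ) :
    cF G p t s n k J = bCoeff p t s n k * (chainCount G p s (insert k J) : ℤ)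
      - ∑ j ∈ Finset.range k, cF G p t s n j (insert k J) := by
  have h1 : cF G p t s n k J = ∑ I ∈ (Finset.range k).powerset,
      (-1 : ℤ) ^ (I.card) * bCoeff p t s n (myMin (insert k I)) *
        (chainCount G p s (insert k I ∪ J) : ℤ) := by
    unfold cF
    symm
    refine Finset.sum_bij (fun I _ => insert k I) ?_ ?_ ?_ ?_
    · intro I hI
      simp only [Finset.mem_powerset, Finset.mem_filter] at hI ⊢
      refine ⟨?_, by simp⟩
      rw [Finset.range_add_one]
      exact Finset.insert_subset_insert _ hI
    · intro I hI I' hI' h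
      simp only [Finset.mem_powerset] at hI hI'
      have a : k ∉ I := fun h => by simpa using hI h
      have b : k ∉ I' := fun h => by simpa using hI' h
      have := congrArg (fun X => Finset.erase X k) h
      simpa [Finset.erase_insert a, Finset.erase_insert b] using this
    · intro I hI
      simp only [Finset.mem_powerset, Finset.mem_filter] at hI
      refine ⟨I.erase k, ?_, Finset.insert_erase hI.2⟩
      rw [Finset.mem_powerset]
      intro i hi
      have := hI.1 (Finset.mem_of_mem_erase hi)
      have := Finset.ne_of_mem_erase hi
      simp only [Finset.mem_range] at *
      omega
    · intro I hI
      simp only [Finset.mem_powerset] at hI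
      have a : k ∉ I := fun h => by simpa using hI h
      rw [Finset.card_insert_of_notMem a, pow_add, pow_add]
      simp
  have h2 : ∑ I ∈ (Finset.range k).powerset.erase ∅,
      (-1 : ℤ) ^ (I.card) * bCoeff p t s n (myMin (insert k I)) *
        (chainCount G p s (insert k I ∪ J) : ℤ) =
      - ∑ j ∈ Finset.range k, cF G p t s n j (insert k J) := by
    rw [← Finset.sum_fiberwise_of_maps_to (t := Finset.range k) (g := fun I => I.sup id),
      ← Finset.sum_neg_distrib]
    · refine Finset.sum_congr rfl ?_
      intro j hj
      unfold cF
      rw [← Finset.sum_neg_distrib]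
      have : ((Finset.range k).powerset.erase ∅).filter (fun I => I.sup id = j) =
          (Finset.range (j+1)).powerset.filter (fun I => j ∈ I) := by
        ext I
        simp only [Finset.mem_filter, Finset.mem_erase, Finset.mem_powerset, ne_eq]
        simp only [Finset.mem_range] at hj
        constructor
        · rintro ⟨⟨hne, hsub⟩, hsup⟩
          have hne := Finset.nonempty_iff_ne_empty.2 hne
          constructor
          · intro i hi
            have : id i ≤ I.sup id := Finset.le_sup hi
            simp only [id, Finset.mem_range] at *
            omega
          · obtain ⟨i, hi, h⟩ := Finset.exists_mem_eq_sup I hne id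
            simp only [id] at h
            rw [← hsup]
            rw [h]
            exact hi
        · rintro ⟨hsub, hmem⟩
          refine ⟨⟨fun h => by simp [h] at hmem, fun i hi => ?_⟩, ?_⟩
          · have := hsub hi
            simp only [Finset.mem_range] at *
            omega
          · apply le_antisymm
            · apply Finset.sup_le
              intro i hi
              have := hsub hi
              simp only [Finset.mem_range, id] at *
              omega
            · exact Finset.le_sup (f := id) hmem
      rw [this]
      refine Finset.sum_congr rfl ?_
      intro I hI
      simp only [Finset.mem_filter, Finset.mem_powerset] at hI
      simp only [Finset.mem_range] at hj
      rw [myMin_insert k I ⟨j, hI.2⟩, Finset.insert_union, Finset.union_insert, pow_add]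
      · ring
      · intro i hi
        have := hI.1 hi
        simp only [Finset.mem_range] at *
        omega
    · intro I hI
      simp only [Finset.mem_erase, Finset.mem_powerset, ne_eq] at hI
      obtain ⟨i, hi, h⟩ := Finset.exists_mem_eq_sup I (Finset.nonempty_iff_ne_empty.2 hI.1) id
      rw [h]
      exact hI.2 hi
  rw [h1, ← Finset.add_sum_erase _ _ (Finset.empty_mem_powerset _), h2]
  simp [myMin, sub_eq_add_neg]

lemma cA_insert {G : Type*} [Group G] [Finite G] (p s k : ℕ) (J : Finset ℕ)
    (hJ : J ⊆ Finset.Icc k s) : cA G p s k (insert k J) = cA G p s k J := by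
  classical
  have hmem : ∀ i : J, (i : ℕ) ∈ insert k J := fun i => Finset.mem_insert_of_mem i.2
  have key : ∀ (x : Set G × (↥(insert k J) → Subgroup G)), IsB p s x →
      Nat.card (MulAction.stabilizer G x.1) = p ^ (s - k) →
      x.2 ⟨k, by simp⟩ = MulAction.stabilizer G x.1 := by
    intro x hx h
    apply Subgroup.eq_of_le_of_card_ge (hx.2.2.2 _)
    rw [h, hx.2.2.1.2]
  refine Nat.card_congr (Equiv.ofBijective (fun x => ⟨(x.1.1, fun i => x.1.2 ⟨i, hmem i⟩),
    ⟨x.2.1.1, x.2.1.2.1, ⟨fun i j h => x.2.1.2.2.1.1 _ _ h, fun i => x.2.1.2.2.1.2 _⟩,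
      fun i => x.2.1.2.2.2 _⟩, x.2.2⟩) ⟨?_, ?_⟩)
  · rintro ⟨⟨M, g⟩, h1, h2⟩ ⟨⟨M', g'⟩, h1', h2'⟩ h
    simp only [Subtype.mk.injEq, Prod.mk.injEq] at h
    obtain ⟨rfl, h⟩ := h
    simp only [Subtype.mk.injEq, Prod.mk.injEq, true_and]
    funext ⟨i, hi⟩
    rcases Finset.mem_insert.1 hi with rfl | hi'
    · exact (key _ h1 h2).trans (key _ h1' h2').symm
    · exact congrFun h ⟨i, hi'⟩
  · rintro ⟨⟨M, f⟩, h1, h2⟩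
    refine ⟨⟨(M, fun i => if h : (i : ℕ) ∈ J then f ⟨i, h⟩ else MulAction.stabilizer G M),
      ⟨h1.1, h1.2.1, ⟨?_, ?_⟩, ?_⟩, h2⟩, ?_⟩
    · rintro ⟨i, hi⟩ ⟨j, hj⟩ hij
      simp only at hij ⊢
      split_ifs with a b b
      · exact h1.2.2.1.1 _ _ hij
      · exact h1.2.2.2 _
      · have hj' : j = k := by simpa [a] using hj
        have := Finset.mem_Icc.1 (hJ b)
        have : i = j := by omega
        exact absurd (this ▸ b) a
      · exact le_rfl
    · rintro ⟨i, hi⟩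
      simp only
      split_ifs with a
      · exact h1.2.2.1.2 _
      · have hi' : i = k := by simpa [a] using hi
        rw [hi']; exact h2
    · rintro ⟨i, hi⟩
      simp only
      split_ifs with a
      · exact h1.2.2.2 _
      · exact le_rfl
    · simp

lemma card_stab_dvd {G : Type*} [Group G] [Finite G] (M : Set G) (h1 : (1 : G) ∈ M) :
    Nat.card (MulAction.stabilizer G M) ∣ Nat.card M := by
  let S := MulAction.stabilizer G M
  have hM : ∀ g ∈ S, ∀ x, g * x ∈ M ↔ x ∈ M := by
    intro g hg x
    have hg : g • M = M := hg
    conv_lhs => rw [← hg]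
    exact Set.smul_mem_smul_set_iff
  let T : Set (G ⧸ S) := {q | ∃ g : G, g⁻¹ ∈ M ∧ (g : G ⧸ S) = q}
  have e : (M⁻¹ : Set G) = (QuotientGroup.mk : G → G ⧸ S) ⁻¹' T := by
    ext g
    simp only [Set.mem_inv, Set.mem_preimage, T, Set.mem_ofPred_eq]
    constructor
    · intro h; exact ⟨g, h, rfl⟩
    · rintro ⟨g', h, h'⟩
      rw [QuotientGroup.eq] at h'
      have := hM _ (S.inv_mem h') g'⁻¹
      simp only [mul_inv_rev, inv_inv, mul_assoc, mul_inv_cancel, mul_one] at this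
      exact this.2 h
  have : Nat.card M = Nat.card (M⁻¹ : Set G) := by
    rw [Set.natCard_inv]
  rw [this, e, Nat.card_congr (QuotientGroup.preimageMkEquivSubgroupProdSet S T), Nat.card_prod]
  exact dvd_mul_right _ _

lemma cB_eq_sum {G : Type*} [Group G] [Finite G] (p s k : ℕ) (hp : p.Prime) (hk : k ≤ s)
    (J : Finset ℕ) (hkJ : k ∈ J) :
    cB G p s J = ∑ j ∈ Finset.range (k + 1), cA G p s j J := by
  classical
  have : Fintype G := Fintype.ofFinite G
  have : Fintype (Subgroup G) := Fintype.ofFinite _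
  have hst : ∀ x : Set G × (J → Subgroup G), IsB p s x → ∃ j, j ≤ k ∧
      Nat.card (MulAction.stabilizer G x.1) = p ^ (s - j) := by
    intro x hx
    have h1 := card_stab_dvd x.1 hx.1
    rw [hx.2.1, Nat.dvd_prime_pow hp] at h1
    obtain ⟨m, hm, h1⟩ := h1
    have h2 := Subgroup.card_le_of_le (hx.2.2.2 ⟨k, hkJ⟩)
    rw [hx.2.2.1.2, h1] at h2
    have h3 := (Nat.pow_le_pow_iff_right hp.one_lt).1 h2
    simp only at h3
    exact ⟨s - m, by omega, by rw [h1]; congr 1; omega⟩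
  unfold cB cA
  simp only [Nat.card_eq_fintype_card (α := {x : Set G × (J → Subgroup G) // _}),
    Fintype.card_subtype]
  rw [Finset.card_eq_sum_card_fiberwise (t := Finset.range (k+1))
    (f := fun x => s - Nat.log p (Nat.card (MulAction.stabilizer G x.1)))]
  · refine Finset.sum_congr rfl fun j hj => ?_
    congr 1
    ext x
    simp only [Finset.mem_filter, Finset.mem_univ, true_and, Finset.mem_range] at hj ⊢
    refine and_congr_right fun hx => ?_
    obtain ⟨j', hj', h⟩ := hst x hx
    rw [h, Nat.log_pow hp.one_lt, (Nat.pow_right_injective hp.two_le).eq_iff]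
    omega
  · intro x hx
    simp only [Finset.coe_filter, Finset.mem_univ, true_and, Set.mem_ofPred_eq] at hx
    obtain ⟨j', hj', h⟩ := hst x hx
    simp only [Finset.coe_range, Set.mem_Iio]
    rw [h, Nat.log_pow hp.one_lt]
    omega

lemma card_sets {α : Type*} [Finite α] (a : α) (m : ℕ) (hm : 0 < m) :
    Nat.card {T : Set α // a ∈ T ∧ Nat.card T = m} = (Nat.card α - 1).choose (m - 1) := by
  classical
  have : Fintype α := Fintype.ofFinite α
  have h : ((Finset.univ.erase a).powersetCard (m - 1)).card = (Nat.card α - 1).choose (m - 1) := by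
    rw [Finset.card_powersetCard, Finset.card_erase_of_mem (Finset.mem_univ _),
      Finset.card_univ, Nat.card_eq_fintype_card]
  rw [← h, ← Nat.card_eq_finsetCard]
  symm
  have ha : ∀ S ∈ (Finset.univ.erase a).powersetCard (m - 1), a ∉ S := by
    intro S hS h
    have := (Finset.mem_powersetCard.1 hS).1 h
    simp at this
  refine Nat.card_congr (Equiv.ofBijective (fun S => ⟨((insert a S.1 : Finset α) : Set α),
    by simp, ?_⟩) ⟨?_, ?_⟩)
  · have h1 := (Finset.mem_powersetCard.1 S.2).2
    rw [Nat.card_coe_set_eq, Set.ncard_coe_finset, Finset.card_insert_of_notMem (ha _ S.2), h1]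
    omega
  · rintro ⟨S, hS⟩ ⟨S', hS'⟩ h
    rw [Subtype.mk.injEq] at h ⊢
    have h := Finset.coe_injective h
    rw [← Finset.erase_insert (ha _ hS), h, Finset.erase_insert (ha _ hS')]
  · rintro ⟨T, h1, h2⟩
    have hT : a ∈ T.toFinset := by simpa using h1
    refine ⟨⟨T.toFinset.erase a, ?_⟩, ?_⟩
    · rw [Finset.mem_powersetCard]
      refine ⟨Finset.erase_subset_erase _ (Finset.subset_univ _), ?_⟩
      rw [Finset.card_erase_of_mem hT, ← h2, Nat.card_coe_set_eq, Set.ncard_eq_toFinset_card']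
    · rw [Subtype.mk.injEq, Finset.insert_erase hT]
      simp

lemma card_M {G : Type*} [Group G] [Finite G]
    (p t n s k : ℕ) (hp : p.Prime) (hG : Nat.card G = p ^ t * n)
    (hs : s ≤ t) (hk : k ≤ s) (V : Subgroup G) (hV : Nat.card V = p ^ (s - k)) :
    (Nat.card {M : Set G // (1 : G) ∈ M ∧ Nat.card M = p ^ s ∧ V ≤ MulAction.stabilizer G M} : ℤ)
      = bCoeff p t s n k := by
  have hidx : Nat.card (G ⧸ V) = p ^ (t - s + k) * n := by
    have h := Subgroup.card_eq_card_quotient_mul_card_subgroup V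
    rw [hG, hV] at h
    have : p ^ t = p ^ (t - s + k) * p ^ (s - k) := by rw [← pow_add]; congr 1; omega
    rw [this] at h
    have h0 : 0 < p ^ (s - k) := pow_pos hp.pos _
    apply Nat.eq_of_mul_eq_mul_right h0
    rw [← h]; ring
  have hcard : ∀ T : Set (G ⧸ V),
      Nat.card ((((QuotientGroup.mk : G → G ⧸ V) ⁻¹' T)⁻¹ : Set G)) = p ^ (s-k) * Nat.card T := by
    intro T
    rw [Set.natCard_inv, Nat.card_congr (QuotientGroup.preimageMkEquivSubgroupProdSet V T),
      Nat.card_prod, hV]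
  have hps : p ^ s = p ^ (s - k) * p ^ k := by rw [← pow_add]; congr 1; omega
  unfold bCoeff
  rw [← hidx, ← card_sets ((1 : G) : G ⧸ V) (p ^ k) (pow_pos hp.pos _)]
  congr 1
  symm
  refine Nat.card_congr (Equiv.ofBijective (fun T => ⟨((QuotientGroup.mk : G → G ⧸ V) ⁻¹' T.1)⁻¹,
    by simpa using T.2.1, by rw [hcard, T.2.2, hps], ?_⟩) ⟨?_, ?_⟩)
  · intro v hv
    rw [MulAction.mem_stabilizer_iff]
    ext g
    rw [Set.mem_smul_set_iff_inv_smul_mem]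
    simp only [Set.mem_inv, Set.mem_preimage, smul_eq_mul, mul_inv_rev, inv_inv]
    rw [QuotientGroup.mk_mul_of_mem _ hv]
  · rintro ⟨T, hT⟩ ⟨T', hT'⟩ h
    simp only [Subtype.mk.injEq, inv_inj] at h ⊢
    exact Function.Surjective.preimage_injective (QuotientGroup.mk_surjective) h
  · rintro ⟨M, h1, h2, h3⟩
    have e : ((QuotientGroup.mk : G → G ⧸ V) ⁻¹' {q | ∃ g : G, g⁻¹ ∈ M ∧ (g : G ⧸ V) = q})⁻¹ = M := by
      ext g
      simp only [Set.mem_inv, Set.mem_preimage, Set.mem_ofPred_eq]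
      constructor
      · rintro ⟨g', h, h'⟩
        rw [QuotientGroup.eq] at h'
        have h4 : (g' * 1) ⁻¹ ∈ M := by simpa using h
        have h5 := h3 (V.inv_mem h')
        rw [MulAction.mem_stabilizer_iff] at h5
        rw [← h5]
        refine ⟨g'⁻¹, h, ?_⟩
        simp
      · intro h
        exact ⟨g⁻¹, by simpa using h, rfl⟩
    refine ⟨⟨{q | ∃ g : G, g⁻¹ ∈ M ∧ (g : G ⧸ V) = q}, ⟨1, by simpa using h1, rfl⟩, ?_⟩, ?_⟩
    · have := hcard {q | ∃ g : G, g⁻¹ ∈ M ∧ (g : G ⧸ V) = q}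
      rw [e, h2, hps] at this
      exact (Nat.eq_of_mul_eq_mul_left (pow_pos hp.pos _) this).symm
    · simp only [Subtype.mk.injEq]
      exact e

lemma cB_eq {G : Type*} [Group G] [Finite G]
    (p t n s k : ℕ) (hp : p.Prime) (hG : Nat.card G = p ^ t * n)
    (hs : s ≤ t) (hk : k ≤ s) (J : Finset ℕ) (hkJ : k ∈ J) (hJ : J ⊆ Finset.Icc k s) :
    (cB G p s J : ℤ) = bCoeff p t s n k * (chainCount G p s J : ℤ) := by
  classical
  have e : {x : Set G × (J → Subgroup G) // IsB p s x} ≃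
      Σ f : {f : J → Subgroup G // IsCh p s f},
        {M : Set G // (1 : G) ∈ M ∧ Nat.card M = p ^ s ∧
          f.1 ⟨k, hkJ⟩ ≤ MulAction.stabilizer G M} :=
    { toFun := fun x => ⟨⟨x.1.2, x.2.2.2.1⟩, ⟨x.1.1, x.2.1, x.2.2.1, x.2.2.2.2 _⟩⟩
      invFun := fun z => ⟨(z.2.1, z.1.1), z.2.2.1, z.2.2.2.1, z.1.2, fun i =>
        (z.1.2.1 ⟨k, hkJ⟩ i (Finset.mem_Icc.1 (hJ i.2)).1).trans z.2.2.2.2⟩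
      left_inv := fun _ => rfl
      right_inv := fun _ => rfl }
  have : Fintype {f : J → Subgroup G // IsCh p s f} := Fintype.ofFinite _
  unfold cB
  rw [Nat.card_congr e, Nat.card_sigma, Nat.cast_sum,
    Finset.sum_congr rfl (fun f _ => card_M p t n s k hp hG hs hk _ (f.2.2 ⟨k, hkJ⟩))]
  rw [Finset.sum_const, Finset.card_univ, ← Nat.card_eq_fintype_card, nsmul_eq_mul, mul_comm]
  rfl

lemma cA_eq {G : Type*} [Group G] [Finite G]
    (p t n s : ℕ) (hp : p.Prime) (hG : Nat.card G = p ^ t * n) (hs : s ≤ t) (k : ℕ) :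
    ∀ (_ : k ≤ s) (J : Finset ℕ) (_ : J ⊆ Finset.Icc k s),
    (cA G p s k J : ℤ) = cF G p t s n k J := by
  induction k using Nat.strong_induction_on with
  | _ k ih =>
    intro hk J hJ
    have hJ' : insert k J ⊆ Finset.Icc k s := by
      apply Finset.insert_subset _ hJ
      simp [hk]
    have h1 := cB_eq p t n s k hp hG hs hk (insert k J) (by simp) hJ'
    rw [cB_eq_sum p s k hp hk _ (by simp), Finset.sum_range_succ, cA_insert p s k J hJ] at h1
    rw [cF_rec, ← h1]
    push_cast
    rw [Finset.sum_congr rfl (fun j hj => (ih j (Finset.mem_range.1 hj)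
      (by have := Finset.mem_range.1 hj; omega) (insert k J)
      (hJ'.trans (Finset.Icc_subset_Icc_left (Finset.mem_range.1 hj).le))))]
    ring

lemma union_cosets_iff {G : Type*} [Group G] [Finite G] (U : Subgroup G) (M : Set G) :
    (∃ S : Set G, M = ⋃ g ∈ S, (U : Set G) * {g}) ↔ U ≤ MulAction.stabilizer G M := by
  constructor
  · rintro ⟨S, rfl⟩ u hu
    rw [MulAction.mem_stabilizer_iff]
    ext x
    rw [Set.mem_smul_set_iff_inv_smul_mem]
    simp only [Set.mem_iUnion, Set.mul_singleton, Set.mem_image, smul_eq_mul, SetLike.mem_coe]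
    constructor
    · rintro ⟨g, hg, v, hv, h⟩
      exact ⟨g, hg, u * v, U.mul_mem hu hv, by rw [mul_assoc, h]; simp⟩
    · rintro ⟨g, hg, v, hv, h⟩
      exact ⟨g, hg, u⁻¹ * v, U.mul_mem (U.inv_mem hu) hv, by rw [mul_assoc, h]⟩
  · intro h
    refine ⟨M, ?_⟩
    ext x
    simp only [Set.mem_iUnion, Set.mul_singleton, Set.mem_image, SetLike.mem_coe]
    constructor
    · intro hx
      exact ⟨x, hx, 1, U.one_mem, by simp⟩
    · rintro ⟨g, hg, v, hv, rfl⟩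
      have := h hv
      rw [MulAction.mem_stabilizer_iff] at this
      rw [← this]
      exact ⟨g, hg, rfl⟩

lemma sigma_eq {G : Type*} [Group G] [Finite G]
    (p s l k : ℕ) (hl : l ≤ s) 
    (Ihat : Finset ℕ) (hIhat : Ihat ⊆ Finset.Icc l s) :
    Nat.card
        (Σ x : {x : Subgroup G × Set G //
            Nat.card x.1 = p ^ (s - l) ∧ (1 : G) ∈ x.2 ∧ Nat.card x.2 = p ^ s ∧
            Nat.card (MulAction.stabilizer G x.2) = p ^ (s - k) ∧
            ∃ S : Set G, x.2 = ⋃ g ∈ S, (x.1.1 : Set G) * {g}},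
          {f : Ihat → Subgroup G //
            (∀ i j : Ihat, (i : ℕ) ≤ (j : ℕ) → f j ≤ f i) ∧
            (∀ i : Ihat, Nat.card (f i) = p ^ (s - (i : ℕ))) ∧
            ∀ i : Ihat, f i ≤ x.1.1}) = cA G p s k (insert l Ihat) := by
  classical
  let P : Set G × Subgroup G × (Ihat → Subgroup G) → Prop := fun z =>
    (Nat.card z.2.1 = p ^ (s - l) ∧ (1 : G) ∈ z.1 ∧ Nat.card z.1 = p ^ s ∧
            Nat.card (MulAction.stabilizer G z.1) = p ^ (s - k) ∧
            ∃ S : Set G, z.1 = ⋃ g ∈ S, (z.2.1 : Set G) * {g}) ∧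
     ((∀ i j : Ihat, (i : ℕ) ≤ (j : ℕ) → z.2.2 j ≤ z.2.2 i) ∧
            (∀ i : Ihat, Nat.card (z.2.2 i) = p ^ (s - (i : ℕ))) ∧
            ∀ i : Ihat, z.2.2 i ≤ z.2.1)
  trans Nat.card {z // P z}
  · exact Nat.card_congr
      { toFun := fun x => ⟨(x.1.1.2, x.1.1.1, x.2.1), x.1.2, x.2.2⟩
        invFun := fun z => ⟨⟨(z.1.2.1, z.1.1), z.2.1⟩, ⟨z.1.2.2, z.2.2⟩⟩
        left_inv := fun _ => rfl
        right_inv := fun _ => rfl }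
  symm
  have hmem : ∀ i : Ihat, (i : ℕ) ∈ insert l Ihat := fun i => Finset.mem_insert_of_mem i.2
  have hlm : l ∈ insert l Ihat := by simp
  refine Nat.card_congr (Equiv.ofBijective (fun x => ⟨(x.1.1, x.1.2 ⟨l, hlm⟩,
    fun i => x.1.2 ⟨i, hmem i⟩), ⟨x.2.1.2.2.1.2 _, x.2.1.1, x.2.1.2.1, x.2.2,
      (union_cosets_iff _ _).2 (x.2.1.2.2.2 _)⟩, fun i j h => x.2.1.2.2.1.1 _ _ h,
      fun i => x.2.1.2.2.1.2 _,
      fun i => x.2.1.2.2.1.1 _ _ (Finset.mem_Icc.1 (hIhat i.2)).1⟩) ⟨?_, ?_⟩)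
  · rintro ⟨⟨M, g⟩, h1, h2⟩ ⟨⟨M', g'⟩, h1', h2'⟩ h
    simp only [Subtype.mk.injEq, Prod.mk.injEq] at h
    obtain ⟨rfl, hU, h⟩ := h
    simp only [Subtype.mk.injEq, Prod.mk.injEq, true_and]
    funext ⟨i, hi⟩
    rcases Finset.mem_insert.1 hi with rfl | hi'
    · exact hU
    · exact congrFun h ⟨i, hi'⟩
  · rintro ⟨⟨M, U, f⟩, ⟨hU, h1, hM, hst, hS⟩, hf1, hf2, hf3⟩
    simp only at hU h1 hM hst hS hf1 hf2 hf3
    rw [union_cosets_iff] at hS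
    have hfl : ∀ i : Ihat, (i : ℕ) = l → f i = U := by
      intro i hi
      apply Subgroup.eq_of_le_of_card_ge (hf3 i)
      rw [hU, hf2, hi]
    refine ⟨⟨(M, fun i => if h : (i : ℕ) ∈ Ihat then f ⟨i, h⟩ else U),
      ⟨h1, hM, ⟨?_, ?_⟩, ?_⟩, hst⟩, ?_⟩
    · rintro ⟨i, hi⟩ ⟨j, hj⟩ hij
      simp only at hij ⊢
      split_ifs with a b b
      · exact hf1 _ _ hij
      · exact hf3 _
      · have hj' : j = l := by simpa [a] using hj
        have := Finset.mem_Icc.1 (hIhat b)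
        have : i = j := by omega
        exact absurd (this ▸ b) a
      · exact le_rfl
    · rintro ⟨i, hi⟩
      simp only
      split_ifs with a
      · exact hf2 _
      · have hi' : i = l := by simpa [a] using hi
        rw [hi']; exact hU
    · rintro ⟨i, hi⟩
      simp only
      split_ifs with a
      · exact (hf3 _).trans hS
      · exact hS
    · simp only [Subtype.mk.injEq, Prod.mk.injEq, true_and]
      refine ⟨?_, ?_⟩
      · split_ifs with a
        · exact hfl _ rfl
        · rfl
      · funext i
        simp

/-- Let `l ∈ [0, s]`, `k ∈ [0, l]` and `Ihat ⊆ [l, s]`.  Summing, over all pairs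
`(U, M)` with `U ≤ G` of order `p^(s-l)`, `M ⊆ G`, `1 ∈ M`, `|M| = p^s`,
`|Stab(M)| = p^(s-k)` and `M` a union of right cosets of `U`, the number of chains
of subgroups of `U` of orders `p^(s-i)` for `i ∈ Ihat`, one obtains
`∑_{I ⊆ [0,k], k ∈ I} (-1)^(|I|+1) · b(min I) · N(s - (I ∪ {l} ∪ Ihat))`.
(The sum over pairs is expressed as the cardinality of a sigma type.) -/
theorem sum_chains_in_U_eq_alternating_sum {G : Type*} [Group G] [Finite G]
    (p t n s l k : ℕ) (hp : p.Prime) (hG : Nat.card G = p ^ t * n) (hn : ¬ p ∣ n)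
    (hs : s ≤ t) (hl : l ≤ s) (hk : k ≤ l)
    (Ihat : Finset ℕ) (hIhat : Ihat ⊆ Finset.Icc l s) :
    (Nat.card
        (Σ x : {x : Subgroup G × Set G //
            Nat.card x.1 = p ^ (s - l) ∧ (1 : G) ∈ x.2 ∧ Nat.card x.2 = p ^ s ∧
            Nat.card (MulAction.stabilizer G x.2) = p ^ (s - k) ∧
            ∃ S : Set G, x.2 = ⋃ g ∈ S, (x.1.1 : Set G) * {g}},
          {f : Ihat → Subgroup G //
            (∀ i j : Ihat, (i : ℕ) ≤ (j : ℕ) → f j ≤ f i) ∧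
            (∀ i : Ihat, Nat.card (f i) = p ^ (s - (i : ℕ))) ∧
            ∀ i : Ihat, f i ≤ x.1.1}) : ℤ)
      = ∑ I ∈ ((Finset.range (k + 1)).powerset.filter (fun I => k ∈ I)).attach,
          (-1 : ℤ) ^ (I.1.card + 1) *
            bCoeff p t s n (I.1.min' ⟨k, (Finset.mem_filter.mp I.2).2⟩) *
            (chainCount G p s (insert l I.1 ∪ Ihat) : ℤ) := by
  rw [sigma_eq p s l k hl Ihat hIhat, cA_eq p t n s hp hG hs k (hk.trans hl)]
  · unfold cF
    rw [← Finset.sum_attach]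
    refine Finset.sum_congr rfl fun I _ => ?_
    have hne : I.1.Nonempty := ⟨k, (Finset.mem_filter.mp I.2).2⟩
    rw [myMin, dif_pos hne, Finset.insert_union, Finset.union_insert]
  · apply Finset.insert_subset
    · simp [hk, hl]
    · exact hIhat.trans (Finset.Icc_subset_Icc_left hk)
end

section
/- For s ∈ [1, t], the product N(s−1)·N(s) is congruent to N(s−1, s) modulo p^2; that is, the product of the number of subgroups of order p^{s−1} and the number of subgroups of order p^s is congruent modulo p^2 to the number of chains U ≤ V ≤ G with |U| = p^{s−1} and |V| = p^s. -/
open scoped Pointwise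

set_option linter.unusedSectionVars false

namespace WielandtCount

/-- The set of `x` whose inverse lies in a coset belonging to `Y`. -/
noncomputable def pull {G : Type*} [Group G] [Fintype G] (H : Subgroup G)
    (Y : Finset (G ⧸ H)) : Finset G := by
  classical exact Finset.univ.filter (fun x => ((x⁻¹ : G) : G ⧸ H) ∈ Y)

section
variable {G : Type*} [Group G] [Fintype G] [DecidableEq G]

lemma mem_pull (H : Subgroup G) (Y : Finset (G ⧸ H)) (x : G) :
    x ∈ pull H Y ↔ ((x⁻¹ : G) : G ⧸ H) ∈ Y := by
  simp [pull]

lemma card_pull (H : Subgroup G) (Y : Finset (G ⧸ H)) :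
    (pull H Y).card = Nat.card H * Y.card := by
  have h := QuotientGroup.card_preimage_mk H (Y : Set (G ⧸ H))
  rw [Nat.card_eq_card_toFinset (Y : Set (G ⧸ H))] at h
  simp only [Finset.toFinset_coe] at h
  rw [← h, ← Nat.card_eq_finsetCard]
  refine Nat.card_congr ⟨fun x => ⟨x.1⁻¹, ?_⟩, fun x => ⟨x.1⁻¹, ?_⟩, ?_, ?_⟩
  · have := x.2; rw [mem_pull] at this; simpa using this
  · have := x.2; rw [mem_pull, inv_inv]; exact this
  · intro x; simp
  · intro x; simp

lemma le_stab_pull (H : Subgroup G) (Y : Finset (G ⧸ H)) :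
    H ≤ MulAction.stabilizer G (pull H Y) := by
  intro h hh
  rw [MulAction.mem_stabilizer_iff]
  ext x
  rw [← Finset.inv_smul_mem_iff, mem_pull, mem_pull]
  have : (((h⁻¹ • x)⁻¹ : G) : G ⧸ H) = ((x⁻¹ : G) : G ⧸ H) := by
    rw [QuotientGroup.eq]
    simpa using H.inv_mem hh
  rw [this]

lemma exists_pull (H : Subgroup G) (X : Finset G) (hX : H ≤ MulAction.stabilizer G X) :
    ∃ Y, pull H Y = X := by
  classical
  refine ⟨X.image (fun x => ((x⁻¹ : G) : G ⧸ H)), ?_⟩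
  ext x
  rw [mem_pull, Finset.mem_image]
  constructor
  · rintro ⟨y, hy, hxy⟩
    rw [QuotientGroup.eq] at hxy
    have := hX (H.inv_mem hxy)
    rw [MulAction.mem_stabilizer_iff] at this
    rw [← this, ← Finset.inv_smul_mem_iff]
    simpa using hy
  · intro h
    exact ⟨x, h, rfl⟩

lemma pull_injective (H : Subgroup G) : Function.Injective (pull H) := by
  intro Y Z h
  ext q
  obtain ⟨x, rfl⟩ := QuotientGroup.mk_surjective q
  have := Finset.ext_iff.1 h x⁻¹
  simpa [mem_pull] using this

lemma card_stab_dvd (X : Finset G) : Nat.card (MulAction.stabilizer G X) ∣ X.card := by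
  obtain ⟨Y, hY⟩ := exists_pull _ X le_rfl
  have := card_pull _ Y
  rw [hY] at this
  exact ⟨_, this⟩

open Classical in
lemma card_fixed (H : Subgroup G) (j : ℕ) :
    ((Finset.powersetCard (Nat.card H * j) (Finset.univ : Finset G)).filter
      (fun X => H ≤ MulAction.stabilizer G X)).card = H.index.choose j := by
  have : ((Finset.powersetCard (Nat.card H * j) (Finset.univ : Finset G)).filter
      (fun X => H ≤ MulAction.stabilizer G X)) =
      (Finset.powersetCard j (Finset.univ : Finset (G ⧸ H))).image (pull H) := by
    ext X
    simp only [Finset.mem_filter, Finset.mem_powersetCard, Finset.mem_image, Finset.subset_univ,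
      true_and]
    constructor
    · rintro ⟨h1, h2⟩
      obtain ⟨Y, rfl⟩ := exists_pull H X h2
      refine ⟨Y, ?_, rfl⟩
      rw [card_pull] at h1
      exact Nat.eq_of_mul_eq_mul_left Nat.card_pos h1
    · rintro ⟨Y, h, rfl⟩
      exact ⟨by rw [card_pull, h], le_stab_pull H Y⟩
  rw [this, Finset.card_image_of_injective _ (pull_injective H), Finset.card_powersetCard,
    Finset.card_univ, ← Nat.card_eq_fintype_card]
  rfl

open Classical in
lemma dvd_card_big (c d : ℕ) :
    d ∣ ((Finset.powersetCard c (Finset.univ : Finset G)).filter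
      (fun X => d ∣ Nat.card (MulAction.orbit G X))).card := by
  set B := ((Finset.powersetCard c (Finset.univ : Finset G)).filter
      (fun X => d ∣ Nat.card (MulAction.orbit G X))) with hB
  rw [Finset.card_eq_sum_card_image (fun X : Finset G => MulAction.orbit G X) B]
  refine Finset.dvd_sum ?_
  intro O hO
  obtain ⟨X, hX, rfl⟩ := Finset.mem_image.1 hO
  rw [hB, Finset.mem_filter, Finset.mem_powersetCard] at hX
  refine hX.2.trans (dvd_of_eq ?_)
  symm
  rw [← Nat.card_eq_finsetCard]
  refine Nat.card_congr (Equiv.subtypeEquivRight ?_)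
  intro Z
  rw [Finset.mem_filter, MulAction.orbit_eq_iff, hB, Finset.mem_filter, Finset.mem_powersetCard]
  constructor
  · exact fun h => h.2
  · intro h
    refine ⟨⟨⟨Finset.subset_univ _, ?_⟩, ?_⟩, h⟩
    · obtain ⟨g, rfl⟩ := h
      simpa using hX.1.2
    · rw [MulAction.orbit_eq_iff.2 h]; exact hX.2

lemma card_orbit_mul (X : Finset G) :
    Nat.card (MulAction.orbit G X) * Nat.card (MulAction.stabilizer G X) = Nat.card G := by
  classical
  rw [Nat.card_eq_fintype_card, Nat.card_eq_fintype_card, Nat.card_eq_fintype_card]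
  exact MulAction.card_orbit_mul_card_stabilizer_eq_card_group G X

lemma stab_cases {p t n : ℕ} (hp : p.Prime) (hG : Nat.card G = p ^ t * n)
    {s : ℕ} (hst : s ≤ t) {X : Finset G} (hX : X.card = p ^ s) :
    ∃ k ≤ s, Nat.card (MulAction.stabilizer G X) = p ^ k ∧
      Nat.card (MulAction.orbit G X) = p ^ (t - k) * n := by
  have h := card_stab_dvd X
  rw [hX] at h
  obtain ⟨k, hk, hk'⟩ := (Nat.dvd_prime_pow hp).1 h
  refine ⟨k, hk, hk', ?_⟩
  have h2 := card_orbit_mul X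
  rw [hG, hk'] at h2
  apply Nat.eq_of_mul_eq_mul_right (pow_pos hp.pos k)
  rw [h2]
  have : p ^ t = p ^ (t - k) * p ^ k := by rw [← pow_add]; congr 1; omega
  rw [this]; ring

lemma not_pow_dvd {p n a b : ℕ} (hp : p.Prime) (hn : ¬ p ∣ n) (hab : b < a) :
    ¬ p ^ a ∣ p ^ b * n := by
  intro h
  have h1 : p ^ b * p ∣ p ^ b * n := by
    rw [← pow_succ]; exact (pow_dvd_pow p (by omega)).trans h
  exact hn (Nat.dvd_of_mul_dvd_mul_left (pow_pos hp.pos b) h1)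

lemma eq_of_le_card {H K : Subgroup G} (h : H ≤ K) (hc : Nat.card H = Nat.card K) : H = K :=
  Subgroup.eq_of_le_of_card_ge h hc.ge

open Classical in
/-- double counting -/
lemma double_count {ι : Type*} (S : Finset ι) (f : ι → Subgroup G) (c F : ℕ)
    (hF : ∀ i ∈ S, ((Finset.powersetCard c (Finset.univ : Finset G)).filter
      (fun X => f i ≤ MulAction.stabilizer G X)).card = F) :
    ∑ X ∈ Finset.powersetCard c (Finset.univ : Finset G),
      ((S.filter (fun i => f i ≤ MulAction.stabilizer G X)).card : ℤ) = S.card * F := by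
  have := Finset.sum_card_bipartiteAbove_eq_sum_card_bipartiteBelow
    (s := S) (t := Finset.powersetCard c (Finset.univ : Finset G))
    (fun i X => f i ≤ MulAction.stabilizer G X)
  simp only [Finset.bipartiteAbove, Finset.bipartiteBelow] at this
  rw [Finset.sum_congr rfl hF] at this
  simp only [Finset.sum_const, smul_eq_mul] at this
  exact_mod_cast this.symm

lemma card_le_of_le {H K : Subgroup G} (h : H ≤ K) : Nat.card H ≤ Nat.card K :=
  Nat.le_of_dvd Nat.card_pos (Subgroup.card_dvd_of_le h)

lemma index_of {p t n k : ℕ} (hp : p.Prime) (hG : Nat.card G = p ^ t * n) (hk : k ≤ t)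
    {H : Subgroup G} (hH : Nat.card H = p ^ k) : H.index = p ^ (t - k) * n := by
  have := H.card_mul_index
  rw [hG, hH] at this
  apply Nat.eq_of_mul_eq_mul_left (pow_pos hp.pos k)
  rw [this, ← mul_assoc, ← pow_add]; congr 2; omega

open Classical in
lemma coarse {p t n s : ℕ} (hp : p.Prime) (hG : Nat.card G = p ^ t * n) (hn : ¬ p ∣ n)
    (hst : s ≤ t) :
    ((p ^ (t - s + 1) : ℕ) : ℤ) ∣ ((p ^ t * n).choose (p ^ s) : ℤ) -
      (Finset.univ.filter (fun U : Subgroup G => Nat.card U = p ^ s)).card * (p ^ (t - s) * n : ℕ) := by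
  have hB := dvd_card_big (G := G) (p ^ s) (p ^ (t - s + 1))
  rw [← double_count _ (fun U => U) (p ^ s) (p ^ (t - s) * n)]
  · rw [Finset.card_filter] at hB
    convert (Int.natCast_dvd_natCast.2 hB) using 1
    rw [← hG, Nat.card_eq_fintype_card, ← Finset.card_univ, ← Finset.card_powersetCard,
      Finset.card_eq_sum_ones]
    push_cast
    rw [← Finset.sum_sub_distrib]
    refine Finset.sum_congr rfl ?_
    intro X hX
    rw [Finset.mem_powersetCard] at hX
    obtain ⟨k, hk, h1, h2⟩ := stab_cases hp hG hst hX.2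
    rw [h2, Finset.filter_filter]
    rcases hk.eq_or_lt with rfl | hk
    · rw [if_neg (by exact_mod_cast not_pow_dvd hp hn (by omega))]
      have : (Finset.univ.filter (fun U : Subgroup G => Nat.card U = p ^ k ∧
          U ≤ MulAction.stabilizer G X)) = {MulAction.stabilizer G X} := by
        ext U
        simp only [Finset.mem_filter, Finset.mem_univ, true_and, Finset.mem_singleton]
        constructor
        · rintro ⟨a, b⟩; exact eq_of_le_card b (a.trans h1.symm)
        · rintro rfl; exact ⟨h1, le_rfl⟩
      rw [this]; simp
    · rw [if_pos ((pow_dvd_pow p (by omega)).trans (dvd_mul_right _ _))]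
      have : (Finset.univ.filter (fun U : Subgroup G => Nat.card U = p ^ s ∧
          U ≤ MulAction.stabilizer G X)) = ∅ := by
        ext U
        simp only [Finset.mem_filter, Finset.mem_univ, true_and, Finset.notMem_empty, iff_false]
        rintro ⟨a, b⟩
        have := card_le_of_le b
        rw [a, h1] at this
        exact absurd this (not_le.2 (Nat.pow_lt_pow_right hp.one_lt hk))
      rw [this]; simp
  · intro U hU
    rw [Finset.mem_filter] at hU
    have := card_fixed U 1
    rw [hU.2, mul_one, Nat.choose_one_right, index_of hp hG hst hU.2] at this
    exact this

open Classical in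
lemma fine {p t n r : ℕ} (hp : p.Prime) (hG : Nat.card G = p ^ t * n) (hn : ¬ p ∣ n)
    (hst : r + 1 ≤ t) :
    ((p ^ (t - (r + 1) + 2) : ℕ) : ℤ) ∣ ((p ^ t * n).choose (p ^ (r + 1)) : ℤ) -
      (Finset.univ.filter (fun U : Subgroup G => Nat.card U = p ^ (r + 1))).card *
        (p ^ (t - (r + 1)) * n : ℕ) -
      (Finset.univ.filter (fun U : Subgroup G => Nat.card U = p ^ r)).card *
        ((p ^ (t - r) * n).choose p : ℕ) +
      (Finset.univ.filter (fun U : Subgroup G × Subgroup G =>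
        U.1 ≤ U.2 ∧ Nat.card U.1 = p ^ r ∧ Nat.card U.2 = p ^ (r + 1))).card *
        (p ^ (t - (r + 1)) * n : ℕ) := by
  have hB := dvd_card_big (G := G) (p ^ (r + 1)) (p ^ (t - (r + 1) + 2))
  have hfix : ∀ U : Subgroup G, Nat.card U = p ^ (r + 1) →
      ((Finset.powersetCard (p ^ (r + 1)) (Finset.univ : Finset G)).filter
      (fun X => U ≤ MulAction.stabilizer G X)).card = p ^ (t - (r + 1)) * n := by
    intro U hU
    have := card_fixed U 1
    rw [hU, mul_one, Nat.choose_one_right, index_of hp hG hst hU] at this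
    exact this
  rw [← double_count _ (fun U => U) (p ^ (r + 1)) (p ^ (t - (r + 1)) * n),
    ← double_count _ (fun U => U) (p ^ (r + 1)) ((p ^ (t - r) * n).choose p),
    ← double_count _ (fun U => U.2) (p ^ (r + 1)) (p ^ (t - (r + 1)) * n)]
  · rw [Finset.card_filter] at hB
    convert (Int.natCast_dvd_natCast.2 hB) using 1
    rw [← hG, Nat.card_eq_fintype_card, ← Finset.card_univ, ← Finset.card_powersetCard,
      Finset.card_eq_sum_ones]
    push_cast
    rw [← Finset.sum_sub_distrib, ← Finset.sum_sub_distrib, ← Finset.sum_add_distrib]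
    refine Finset.sum_congr rfl ?_
    intro X hX
    rw [Finset.mem_powersetCard] at hX
    obtain ⟨k, hk, h1, h2⟩ := stab_cases hp hG hst hX.2
    rw [h2, Finset.filter_filter, Finset.filter_filter, Finset.filter_filter]
    set K := MulAction.stabilizer G X
    have hempty : ∀ j, k < j → (Finset.univ.filter (fun U : Subgroup G => Nat.card U = p ^ j ∧
          U ≤ K)) = ∅ := by
      intro j hj
      ext U
      simp only [Finset.mem_filter, Finset.mem_univ, true_and, Finset.notMem_empty, iff_false]
      rintro ⟨a, b⟩
      have := card_le_of_le b
      rw [a, h1] at this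
      exact absurd this (not_le.2 (Nat.pow_lt_pow_right hp.one_lt hj))
    have hsing : (Finset.univ.filter (fun U : Subgroup G => Nat.card U = p ^ k ∧
          U ≤ K)) = {K} := by
      ext U
      simp only [Finset.mem_filter, Finset.mem_univ, true_and, Finset.mem_singleton]
      constructor
      · rintro ⟨a, b⟩; exact eq_of_le_card b (a.trans h1.symm)
      · rintro rfl; exact ⟨h1, le_rfl⟩
    have hch : k < r + 1 → (Finset.univ.filter (fun U : Subgroup G × Subgroup G =>
        (U.1 ≤ U.2 ∧ Nat.card U.1 = p ^ r ∧ Nat.card U.2 = p ^ (r + 1)) ∧ U.2 ≤ K)) = ∅ := by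
      intro hk
      ext U
      simp only [Finset.mem_filter, Finset.mem_univ, true_and, Finset.notMem_empty, iff_false]
      rintro ⟨⟨-, -, a⟩, b⟩
      have := Finset.eq_empty_iff_forall_notMem.1 (hempty _ hk) U.2
      exact this (Finset.mem_filter.2 ⟨Finset.mem_univ _, a, b⟩)
    rcases hk.eq_or_lt with rfl | hk
    · rw [if_neg (by exact_mod_cast not_pow_dvd hp hn (by omega)), hsing]
      have : (Finset.univ.filter (fun U : Subgroup G × Subgroup G =>
        (U.1 ≤ U.2 ∧ Nat.card U.1 = p ^ r ∧ Nat.card U.2 = p ^ (r + 1)) ∧ U.2 ≤ K)) =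
        (Finset.univ.filter (fun U : Subgroup G => Nat.card U = p ^ r ∧ U ≤ K)).image
          (fun U => (U, K)) := by
        ext ⟨U, V⟩
        simp only [Finset.mem_filter, Finset.mem_univ, true_and, Finset.mem_image, Prod.mk.injEq]
        constructor
        · rintro ⟨⟨a, b, c⟩, d⟩
          have := eq_of_le_card d (c.trans h1.symm)
          exact ⟨U, ⟨b, a.trans d⟩, rfl, this.symm⟩
        · rintro ⟨W, ⟨a, b⟩, rfl, rfl⟩
          exact ⟨⟨b, a, h1⟩, le_rfl⟩
      rw [this, Finset.card_image_of_injective _ (fun a b h => (Prod.mk.inj h).1)]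
      simp
    · rw [hch hk, hempty _ hk]
      rcases (Nat.lt_succ_iff.1 hk).eq_or_lt with rfl | hk
      · rw [if_neg (by exact_mod_cast not_pow_dvd hp hn (by omega)), hsing]; simp
      · rw [if_pos ((pow_dvd_pow p (by omega)).trans (dvd_mul_right _ _)), hempty _ hk]; simp
  · intro U hU
    exact hfix _ (Finset.mem_filter.1 hU).2.2.2
  · intro U hU
    rw [Finset.mem_filter] at hU
    have := card_fixed U p
    rw [hU.2, ← pow_succ, index_of hp hG (by omega) hU.2] at this
    exact this
  · intro U hU
    exact hfix _ (Finset.mem_filter.1 hU).2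

end

section cyc
variable {C : Type*} [CommGroup C] [IsCyclic C] [Finite C]

lemma cyc_eq {d : ℕ} (hd : d ∣ Nat.card C) (U : Subgroup C) :
    Nat.card U = d ↔ U = (powMonoidHom d : C →* C).ker := by
  have hk := IsCyclic.card_powMonoidHom_ker (G := C) d
  rw [Nat.gcd_eq_right hd] at hk
  constructor
  · intro h
    refine Subgroup.eq_of_le_of_card_ge ?_ (by rw [hk, h])
    intro x hx
    rw [MonoidHom.mem_ker, powMonoidHom_apply, ← h]
    exact congrArg Subtype.val (pow_card_eq_one' (x := (⟨x, hx⟩ : U)))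
  · rintro rfl; exact hk

end cyc

open Classical in
lemma binom {p m : ℕ} (hp : p.Prime) (hm : 0 < m) :
    ∃ e : ℕ, (p * m).choose p = m * e ∧ (p : ℤ) ∣ (e : ℤ) - 1 := by
  have : Fact p.Prime := ⟨hp⟩
  obtain ⟨q, rfl⟩ : ∃ q, p = q + 1 := ⟨p - 1, by have := hp.pos; omega⟩
  obtain ⟨l, rfl⟩ : ∃ l, m = l + 1 := ⟨m - 1, by omega⟩
  have e1 : (q + 1) * (l + 1) = ((q + 1) * l + q) + 1 := by ring
  refine ⟨((q + 1) * l + q).choose q, ?_, ?_⟩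
  · have h := Nat.add_one_mul_choose_eq ((q + 1) * l + q) q
    rw [← e1] at h
    apply Nat.eq_of_mul_eq_mul_right (Nat.succ_pos q)
    rw [← h, Nat.succ_eq_add_one]; ring
  · have h := Choose.choose_modEq_choose_mod_mul_choose_div_nat (p := q + 1)
      (n := (q + 1) * l + q) (k := q)
    have a1 : ((q + 1) * l + q) % (q + 1) = q := by
      rw [Nat.mul_add_mod]; exact Nat.mod_eq_of_lt (Nat.lt_succ_self q)
    have a2 : q % (q + 1) = q := Nat.mod_eq_of_lt (Nat.lt_succ_self q)
    have a3 : q / (q + 1) = 0 := Nat.div_eq_of_lt (Nat.lt_succ_self q)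
    rw [a1, a2, a3, Nat.choose_self, Nat.choose_zero_right, mul_one] at h
    have := (Nat.modEq_iff_dvd.1 h.symm)
    simpa using this

open Classical in
lemma cyc_count {C : Type*} [CommGroup C] [IsCyclic C] [Fintype C] {d : ℕ}
    (hd : d ∣ Nat.card C) :
    (Finset.univ.filter (fun U : Subgroup C => Nat.card U = d)).card = 1 := by
  rw [Finset.card_eq_one]
  refine ⟨(powMonoidHom d : C →* C).ker, ?_⟩
  ext U
  rw [Finset.mem_filter, cyc_eq hd]
  simp

open Classical in
lemma cyc_chain {C : Type*} [CommGroup C] [IsCyclic C] [Fintype C] {d e : ℕ}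
    (hde : d ∣ e) (he : e ∣ Nat.card C) :
    (Finset.univ.filter (fun U : Subgroup C × Subgroup C =>
      U.1 ≤ U.2 ∧ Nat.card U.1 = d ∧ Nat.card U.2 = e)).card = 1 := by
  rw [Finset.card_eq_one]
  refine ⟨((powMonoidHom d : C →* C).ker, (powMonoidHom e : C →* C).ker), ?_⟩
  ext ⟨U, V⟩
  rw [Finset.mem_filter, cyc_eq (hde.trans he), cyc_eq he, Finset.mem_singleton, Prod.mk.injEq]
  constructor
  · exact fun h => h.2.2
  · rintro ⟨rfl, rfl⟩
    refine ⟨Finset.mem_univ _, ?_, rfl, rfl⟩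
    obtain ⟨c, rfl⟩ := hde
    intro x hx
    rw [MonoidHom.mem_ker, powMonoidHom_apply] at *
    rw [pow_mul, hx, one_pow]

lemma cancel {p a n j : ℕ} {z : ℤ} (hp : p.Prime) (hn : ¬ p ∣ n)
    (h : ((p ^ (a + j) : ℕ) : ℤ) ∣ (p ^ a * n : ℕ) * z) : ((p ^ j : ℕ) : ℤ) ∣ z := by
  have hpa : ((p ^ a : ℕ) : ℤ) ≠ 0 := by exact_mod_cast (pow_pos hp.pos a).ne'
  rw [pow_add] at h
  push_cast at h hpa ⊢
  rw [mul_assoc] at h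
  have h' := (mul_dvd_mul_iff_left hpa).1 h
  refine IsCoprime.dvd_of_dvd_mul_left ?_ h'
  have := (Nat.Coprime.pow_left j ((Nat.Prime.coprime_iff_not_dvd hp).2 hn))
  have := Nat.isCoprime_iff_coprime.2 this
  exact_mod_cast this

open Classical in
lemma count_mod {G : Type*} [Group G] [Fintype G] {p t n s : ℕ} (hp : p.Prime)
    (hG : Nat.card G = p ^ t * n) (hn : ¬ p ∣ n) (hst : s ≤ t) :
    (p : ℤ) ∣ (Finset.univ.filter (fun U : Subgroup G => Nat.card U = p ^ s)).card - 1 := by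
  have hN : p ^ t * n ≠ 0 := by rw [← hG]; exact Nat.card_pos.ne'
  have : NeZero (p ^ t * n) := ⟨hN⟩
  have hC : Nat.card (Multiplicative (ZMod (p ^ t * n))) = p ^ t * n := by simp
  have h1 := coarse hp hG hn hst
  have h2 := coarse hp hC hn hst
  rw [cyc_count (by rw [hC]; exact (pow_dvd_pow p hst).trans (dvd_mul_right _ _))] at h2
  have h3 := dvd_sub h2 h1
  have h4 := cancel (z := (Finset.univ.filter (fun U : Subgroup G => Nat.card U = p ^ s)).card - 1)
    hp hn (h3.trans (dvd_of_eq (by push_cast; ring)))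
  simpa using h4

end WielandtCount

theorem prod_count_congruent_chain_count {G : Type*} [Group G] [Finite G]
    (p t n s : ℕ) (hp : p.Prime) (hG : Nat.card G = p ^ t * n) (hn : ¬ p ∣ n)
    (hs1 : 1 ≤ s) (hst : s ≤ t) :
    Nat.card {U : Subgroup G // Nat.card U = p ^ (s - 1)} *
        Nat.card {U : Subgroup G // Nat.card U = p ^ s}
      ≡ Nat.card {uv : Subgroup G × Subgroup G //
          uv.1 ≤ uv.2 ∧ Nat.card uv.1 = p ^ (s - 1) ∧ Nat.card uv.2 = p ^ s}
        [MOD p ^ 2] := by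
  classical
  have : Fintype G := Fintype.ofFinite G
  obtain ⟨r, rfl⟩ : ∃ r, s = r + 1 := ⟨s - 1, by omega⟩
  rw [Nat.add_sub_cancel]
  have hN : p ^ t * n ≠ 0 := by rw [← hG]; exact Nat.card_pos.ne'
  have : NeZero (p ^ t * n) := ⟨hN⟩
  have hC : Nat.card (Multiplicative (ZMod (p ^ t * n))) = p ^ t * n := by simp
  have hn0 : 0 < n := Nat.pos_of_ne_zero (right_ne_zero_of_mul hN)
  have hd : p ^ (r + 1) ∣ Nat.card (Multiplicative (ZMod (p ^ t * n))) := by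
    rw [hC]; exact (pow_dvd_pow p hst).trans (dvd_mul_right _ _)
  have hd' : p ^ r ∣ p ^ (r + 1) := pow_dvd_pow p (by omega)
  have h1 := WielandtCount.fine hp hG hn hst
  have h2 := WielandtCount.fine hp hC hn hst
  rw [WielandtCount.cyc_count hd, WielandtCount.cyc_count (hd'.trans hd),
    WielandtCount.cyc_chain hd' hd] at h2
  have ha := WielandtCount.count_mod hp hG hn (s := r) (by omega)
  have hb := WielandtCount.count_mod hp hG hn hst
  obtain ⟨e, he, hc⟩ := WielandtCount.binom hp (m := p ^ (t - (r + 1)) * n)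
    (Nat.mul_pos (pow_pos hp.pos _) hn0)
  have hpe : p ^ (t - r) * n = p * (p ^ (t - (r + 1)) * n) := by
    rw [← mul_assoc, ← pow_succ']; congr 2; omega
  rw [hpe, he] at h1 h2
  rw [Nat.card_eq_fintype_card, Nat.card_eq_fintype_card, Nat.card_eq_fintype_card,
    Fintype.card_subtype, Fintype.card_subtype, Fintype.card_subtype]
  set A := (Finset.univ.filter (fun U : Subgroup G => Nat.card U = p ^ r)).card
  set B := (Finset.univ.filter (fun U : Subgroup G => Nat.card U = p ^ (r + 1))).card
  set D := (Finset.univ.filter (fun U : Subgroup G × Subgroup G =>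
        U.1 ≤ U.2 ∧ Nat.card U.1 = p ^ r ∧ Nat.card U.2 = p ^ (r + 1))).card
  have h3 := dvd_sub h1 h2
  have h4 := WielandtCount.cancel (z := (D : ℤ) - B - e * (A - 1)) hp hn
    (h3.trans (dvd_of_eq (by push_cast; ring)))
  have h5 : (p : ℤ) * p ∣ ((B - 1) - (e - 1)) * (A - 1) := mul_dvd_mul (dvd_sub hb hc) ha
  rw [Nat.modEq_iff_dvd]
  push_cast at h4 ⊢
  rw [← pow_two] at h5
  exact (dvd_sub h4 h5).trans (dvd_of_eq (by ring))
end
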